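/- For all positive integers n and k, the following identity holds (as formal power series in q, equivalently in the field of fractions): q^{k(k−1)(6n+8k−1)/6} · Σ_{π∈RPP(δ_{n+2k}/δ_n)} q^{|π|} = det( E*_{2n+2i+2j−3}(q)/(q;q)_{2n+2i+2j−3} )_{i,j=1}^k. -/

import Mathlib

open Finset

attribute [local instance 10] Classical.propDecidable

noncomputable section

namespace Paper

/-! ### Words and permutation statistics (all words are 1-based). -/

/-- The word (one-line notation, 1-based) of a permutation of `{1, …, N}`:
`word π i = π(i)` for `1 ≤ i ≤ N`, and `0` otherwise. -/
def word {N : ℕ} (π : Equiv.Perm (Fin N)) (i : ℕ) : ℕ :=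
  if h : 1 ≤ i ∧ i ≤ N then (π ⟨i - 1, by omega⟩ : ℕ) + 1 else 0

/-- The major index of a word of length `N`: the sum of the descents. -/
def majW (N : ℕ) (w : ℕ → ℕ) : ℕ :=
  ∑ i ∈ Finset.Icc 1 (N - 1), if w (i + 1) < w i then i else 0

/-- The number of inversions of a word of length `N`. -/
def invW (N : ℕ) (w : ℕ → ℕ) : ℕ :=
  (((Finset.Icc 1 N) ×ˢ (Finset.Icc 1 N)).filter
    fun p => p.1 < p.2 ∧ w p.2 < w p.1).card

/-- The number of descents of a word of length `m`. -/
def desW (m : ℕ) (w : ℕ → ℕ) : ℕ :=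
  ((Finset.Icc 1 (m - 1)).filter fun i => w (i + 1) < w i).card

/-- The number of ascents of a word of length `m`. -/
def ascW (m : ℕ) (w : ℕ → ℕ) : ℕ :=
  ((Finset.Icc 1 (m - 1)).filter fun i => w i < w (i + 1)).card

/-- The number of non-descents of a word of length `m`. -/
def ndesW (m : ℕ) (w : ℕ → ℕ) : ℕ :=
  ((Finset.Icc 1 m).filter fun i => i = m ∨ w i < w (i + 1)).card

/-- The number of non-ascents of a word of length `m`. -/
def nascW (m : ℕ) (w : ℕ → ℕ) : ℕ :=
  ((Finset.Icc 1 m).filter fun i => i = m ∨ ¬ w i < w (i + 1)).card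

/-- `π_e = π₂π₄⋯`, the subword of even-position entries, as a 1-based word. -/
def evenWord {N : ℕ} (π : Equiv.Perm (Fin N)) (j : ℕ) : ℕ := word π (2 * j)

/-- `π_o = π₁π₃⋯`, the subword of odd-position entries, as a 1-based word. -/
def oddWord {N : ℕ} (π : Equiv.Perm (Fin N)) (j : ℕ) : ℕ := word π (2 * j - 1)

/-- A word of length `N` is alternating: `w₁ < w₂ > w₃ < w₄ > ⋯`. -/
def IsAltW (N : ℕ) (w : ℕ → ℕ) : Prop :=
  ∀ i ∈ Finset.Icc 1 (N - 1), (i % 2 = 1 → w i < w (i + 1)) ∧ (i % 2 = 0 → w (i + 1) < w i)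

/-- A word of length `N` is reverse alternating: `w₁ > w₂ < w₃ > w₄ < ⋯`. -/
def IsRaltW (N : ℕ) (w : ℕ → ℕ) : Prop :=
  ∀ i ∈ Finset.Icc 1 (N - 1), (i % 2 = 1 → w (i + 1) < w i) ∧ (i % 2 = 0 → w i < w (i + 1))

/-- `Alt_N`, the set of alternating permutations of `{1, …, N}`. -/
def altPerms (N : ℕ) : Finset (Equiv.Perm (Fin N)) :=
  Finset.univ.filter fun π => IsAltW N (word π)

/-- `Ralt_N`, the set of reverse alternating permutations of `{1, …, N}`. -/
def raltPerms (N : ℕ) : Finset (Equiv.Perm (Fin N)) :=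
  Finset.univ.filter fun π => IsRaltW N (word π)

/-- `κ_N = (1)(2,3)(4,5)⋯`, acting on the 1-based values `{1, …, N}`. -/
def kappaNat (N j : ℕ) : ℕ :=
  if j % 2 = 0 ∧ 2 ≤ j ∧ j + 1 ≤ N then j + 1
  else if j % 2 = 1 ∧ 3 ≤ j ∧ j ≤ N then j - 1
  else j

/-- `η_N = (1,2)(3,4)⋯`, acting on the 1-based values `{1, …, N}`. -/
def etaNat (N j : ℕ) : ℕ :=
  if j % 2 = 1 ∧ j + 1 ≤ N then j + 1
  else if j % 2 = 0 ∧ 2 ≤ j ∧ j ≤ N then j - 1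
  else j

/-- `maj(π⁻¹)`. -/
def majInv (N : ℕ) (π : Equiv.Perm (Fin N)) : ℕ := majW N (word π.symm)

/-- `maj(κ_N π⁻¹)`. -/
def majKappaInv (N : ℕ) (π : Equiv.Perm (Fin N)) : ℕ :=
  majW N fun i => kappaNat N (word π.symm i)

/-- `maj(η_N π⁻¹)`. -/
def majEtaInv (N : ℕ) (π : Equiv.Perm (Fin N)) : ℕ :=
  majW N fun i => etaNat N (word π.symm i)

/-- The reversal permutation `i ↦ N + 1 - i` of `Fin N`. -/
def revPerm (N : ℕ) : Equiv.Perm (Fin N) :=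
  ⟨Fin.rev, Fin.rev, fun i => Fin.rev_rev i, fun i => Fin.rev_rev i⟩

/-- `φ(π)ᵢ = (N+1) - π_{N+1-i}`. -/
def phiMap {N : ℕ} (π : Equiv.Perm (Fin N)) : Equiv.Perm (Fin N) :=
  ((revPerm N).trans π).trans (revPerm N)

/-! ### Lattice paths.

A path with `L` unit steps is encoded by `s : Fin L → Bool` (`true` = up-step `(1,1)`,
`false` = down-step `(1,-1)`). -/

/-- The vertical displacement of the `j`-th step. -/
def stepVal {L : ℕ} (s : Fin L → Bool) (j : ℕ) : ℤ :=
  if h : j < L then (if s ⟨j, h⟩ then 1 else -1) else 0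

/-- The height of the path after `i` steps. -/
def pht {L : ℕ} (s : Fin L → Bool) (i : ℕ) : ℤ := ∑ j ∈ Finset.range i, stepVal s j

/-- A Dyck path: stays (weakly) above the `x`-axis and ends at height `0`. -/
def IsDyck {L : ℕ} (s : Fin L → Bool) : Prop :=
  (∀ i ∈ Finset.range (L + 1), 0 ≤ pht s i) ∧ pht s L = 0

/-- The Dyck paths with `L` steps. -/
def dyckPaths (L : ℕ) : Finset (Fin L → Bool) := Finset.univ.filter fun s => IsDyck s

/-- The (indices of the) valleys of a path: a down-step followed by an up-step. -/
def valleys {L : ℕ} (s : Fin L → Bool) : Finset ℕ :=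
  (Finset.Icc 1 (L - 1)).filter fun i => stepVal s (i - 1) = -1 ∧ stepVal s i = 1

/-- The (indices of the) peaks of a path: an up-step followed by a down-step. -/
def peaks {L : ℕ} (s : Fin L → Bool) : Finset ℕ :=
  (Finset.Icc 1 (L - 1)).filter fun i => stepVal s (i - 1) = 1 ∧ stepVal s i = -1

/-- The (indices of the) high peaks of a path: peaks of height at least `2`. -/
def highPeaks {L : ℕ} (s : Fin L → Bool) : Finset ℕ :=
  (peaks s).filter fun i => 2 ≤ pht s i

/-- The height over abscissa `x` of a path starting at `(-m, 0)`. -/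
def aht (m : ℕ) {L : ℕ} (s : Fin L → Bool) (x : ℤ) : ℤ := pht s (x + m).toNat

/-- `D₁ < D₂`, for `D₁` starting at `(-m₁,0)` and `D₂` at `(-m₂,0)`, `m₁ ≤ m₂`:
strictly below on the common range of abscissas. -/
def PathLT (m₁ m₂ : ℕ) {L₁ L₂ : ℕ} (s₁ : Fin L₁ → Bool) (s₂ : Fin L₂ → Bool) : Prop :=
  ∀ x ∈ Finset.Icc (-(m₁ : ℤ)) (m₁ : ℤ), aht m₁ s₁ x < aht m₂ s₂ x

/-- `D₁ ≤ D₂`: weakly below, sharing no step. -/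
def PathLE (m₁ m₂ : ℕ) {L₁ L₂ : ℕ} (s₁ : Fin L₁ → Bool) (s₂ : Fin L₂ → Bool) : Prop :=
  (∀ x ∈ Finset.Icc (-(m₁ : ℤ)) (m₁ : ℤ), aht m₁ s₁ x ≤ aht m₂ s₂ x) ∧
    ∀ x ∈ Finset.Icc (-(m₁ : ℤ)) ((m₁ : ℤ) - 1),
      ¬(aht m₁ s₁ x = aht m₂ s₂ x ∧ aht m₁ s₁ (x + 1) = aht m₂ s₂ (x + 1))

/-- The abscissas of the common lattice points of two paths. -/
def interPts (m₁ m₂ : ℕ) {L₁ L₂ : ℕ} (s₁ : Fin L₁ → Bool) (s₂ : Fin L₂ → Bool) : Finset ℤ :=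
  (Finset.Icc (-(m₁ : ℤ)) (m₁ : ℤ)).filter fun x => aht m₁ s₁ x = aht m₂ s₂ x

/-- `Dyck^k_{2n}`: tuples `(D₁, …, D_k)` with `D_i ∈ Dyck((-n-2i+2,0) → (n+2i-2,0))`
(0-based: `D_i` has half-length `n + 2i`). -/
abbrev DyckTuple (n k : ℕ) := ∀ i : Fin k, Fin (2 * (n + 2 * (i : ℕ))) → Bool

/-- The tuples `(D₁ ≤ D₂ ≤ ⋯ ≤ D_k) ∈ Dyck^k_{2n}`. -/
def weakTuples (n k : ℕ) : Finset (DyckTuple n k) :=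
  Finset.univ.filter fun D =>
    (∀ i : Fin k, IsDyck (D i)) ∧
      ∀ (i : ℕ) (h : i + 1 < k),
        PathLE (n + 2 * i) (n + 2 * (i + 1)) (D ⟨i, by omega⟩) (D ⟨i + 1, h⟩)

/-- The tuples `(D₁ < D₂ < ⋯ < D_k) ∈ Dyck^k_{2n}`. -/
def strictTuples (n k : ℕ) : Finset (DyckTuple n k) :=
  Finset.univ.filter fun D =>
    (∀ i : Fin k, IsDyck (D i)) ∧
      ∀ (i : ℕ) (h : i + 1 < k),
        PathLT (n + 2 * i) (n + 2 * (i + 1)) (D ⟨i, by omega⟩) (D ⟨i + 1, h⟩)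

/-- The lattice points of a path starting at `(-m, 0)`, as a finite subset of `ℤ × ℤ`. -/
def pathPoints (m : ℕ) {L : ℕ} (s : Fin L → Bool) : Finset (ℤ × ℤ) :=
  (Finset.range (L + 1)).image fun t : ℕ => (-(m : ℤ) + (t : ℤ), pht s t)

/-- The non-valley lattice points of a path starting at `(-m, 0)`. -/
def nonValleyPoints (m : ℕ) {L : ℕ} (s : Fin L → Bool) : Finset (ℤ × ℤ) :=
  ((Finset.range (L + 1)).filter fun t => t ∉ valleys s).image
    fun t : ℕ => (-(m : ℤ) + (t : ℤ), pht s t)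

section Weights

variable {F : Type*} [Field F]

/-- The `i`-th lattice point (in `ℤ × ℕ`) of a path starting at `(a, 0)`. -/
def ptOf (a : ℤ) {L : ℕ} (s : Fin L → Bool) (i : ℕ) : ℤ × ℕ := (a + i, (pht s i).toNat)

/-- `wt_V(D) = ∏_{p ∈ D} wt(p) · ∏_{p ∈ V(D)} w̃t(p)` for a path starting at `(a, 0)`. -/
def wtVal (wt wte : ℤ × ℕ → F) (a : ℤ) {L : ℕ} (s : Fin L → Bool) : F :=
  (∏ i ∈ Finset.range (L + 1), wt (ptOf a s i)) * ∏ i ∈ valleys s, wte (ptOf a s i)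

/-- `wt_HP(D) = ∏_{p ∈ D} wt(p) · ∏_{p ∈ HP(D)} w̃t(p)` for a path starting at `(a, 0)`. -/
def wtHigh (wt wte : ℤ × ℕ → F) (a : ℤ) {L : ℕ} (s : Fin L → Bool) : F :=
  (∏ i ∈ Finset.range (L + 1), wt (ptOf a s i)) * ∏ i ∈ highPeaks s, wte (ptOf a s i)

/-- `∏_{p ∈ D₁ ∩ D₂} f(p)`, for `D₁` starting at `(-m₁,0)` and `D₂` at `(-m₂,0)`. -/
def interProd (f : ℤ × ℕ → F) (m₁ m₂ : ℕ) {L₁ L₂ : ℕ}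
    (s₁ : Fin L₁ → Bool) (s₂ : Fin L₂ → Bool) : F :=
  ∏ x ∈ interPts m₁ m₂ s₁ s₂, f (x, (aht m₁ s₁ x).toNat)

/-- The sum over `(D₁ ≤ ⋯ ≤ D_k) ∈ Dyck^k_{2n}` of
`wt_V(D₁)⋯wt_V(D_k) ∏_{i=1}^{k-1} ∏_{p ∈ D_i ∩ D_{i+1}} (1 - w̃t(p)⁻¹)`. -/
def weakSum (wt wte : ℤ × ℕ → F) (n k : ℕ) : F :=
  ∑ D ∈ weakTuples n k,
    (∏ i : Fin k, wtVal wt wte (-(n : ℤ) - 2 * (i : ℕ)) (D i)) *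
      ∏ j : Fin (k - 1),
        interProd (fun p => 1 - (wte p)⁻¹) (n + 2 * (j : ℕ)) (n + 2 * ((j : ℕ) + 1))
          (D ⟨(j : ℕ), by have := j.isLt; omega⟩)
          (D ⟨(j : ℕ) + 1, by have := j.isLt; omega⟩)

/-- The sum over `(D₁ < ⋯ < D_k) ∈ Dyck^k_{2n}` of `wt_V(D₁)⋯wt_V(D_k)`. -/
def strictSum (wt wte : ℤ × ℕ → F) (n k : ℕ) : F :=
  ∑ D ∈ strictTuples n k, ∏ i : Fin k, wtVal wt wte (-(n : ℤ) - 2 * (i : ℕ)) (D i)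

end Weights

/-! ### Schröder paths.

A path with `L` steps is encoded by `st : Fin L → Fin 3`
(`0` = up-step `(1,1)`, `1` = down-step `(1,-1)`, `2` = horizontal step `(2,0)`). -/

/-- The horizontal displacement of the `j`-th step. -/
def stepX {L : ℕ} (st : Fin L → Fin 3) (j : ℕ) : ℕ :=
  if h : j < L then (if st ⟨j, h⟩ = 2 then 2 else 1) else 0

/-- The vertical displacement of the `j`-th step. -/
def stepY {L : ℕ} (st : Fin L → Fin 3) (j : ℕ) : ℤ :=
  if h : j < L then (if st ⟨j, h⟩ = 0 then 1 else if st ⟨j, h⟩ = 1 then -1 else 0) else 0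

/-- The horizontal position (relative to the start) after `j` steps. -/
def xpos {L : ℕ} (st : Fin L → Fin 3) (j : ℕ) : ℕ := ∑ t ∈ Finset.range j, stepX st t

/-- The height after `j` steps. -/
def ypos {L : ℕ} (st : Fin L → Fin 3) (j : ℕ) : ℤ := ∑ t ∈ Finset.range j, stepY st t

/-- A (little) Schröder path of horizontal span `2m`: nonnegative heights, ends at
height `0`, and no horizontal step on the `x`-axis. -/
def IsSch (m : ℕ) {L : ℕ} (st : Fin L → Fin 3) : Prop :=
  xpos st L = 2 * m ∧ (∀ j ∈ Finset.range (L + 1), 0 ≤ ypos st j) ∧ ypos st L = 0 ∧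
    ∀ j ∈ Finset.range L, stepX st j = 2 → ypos st j ≠ 0

/-- The height of a Schröder path over the relative abscissa `x` (midpoints of
horizontal steps get the height of that horizontal step). -/
def schHeight {L : ℕ} (st : Fin L → Fin 3) (x : ℕ) : ℤ :=
  ∑ t ∈ Finset.range L, if xpos st (t + 1) ≤ x then stepY st t else 0

/-- The relative abscissa `x` is the midpoint of a horizontal step. -/
def IsHMid {L : ℕ} (st : Fin L → Fin 3) (x : ℕ) : Prop :=
  ∃ j ∈ Finset.range L, stepX st j = 2 ∧ xpos st j + 1 = x

/-- The number of horizontal steps of a Schröder path. -/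
def hsCount {L : ℕ} (st : Fin L → Fin 3) : ℕ :=
  ((Finset.range L).filter fun j => stepX st j = 2).card

/-- `wt_Sch(c, S) = c^{hs(S)} ∏_{p ∈ S} wt(p)` for a Schröder path starting at `(a,0)`. -/
def wtSch {F : Type*} [Field F] (wt : ℤ × ℕ → F) (c : F) (a : ℤ) {L : ℕ}
    (st : Fin L → Fin 3) : F :=
  c ^ hsCount st * ∏ j ∈ Finset.range (L + 1), wt (a + xpos st j, (ypos st j).toNat)

/-- `φ_V(S) = D`: the Dyck path `D` (with `L'` steps) is obtained from the Schröder
path `S` by replacing each horizontal step by a down-step followed by an up-step. -/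
def PhiVEq {L L' : ℕ} (st : Fin L → Fin 3) (s : Fin L' → Bool) : Prop :=
  ∀ x ∈ Finset.range (L' + 1),
    pht s x = schHeight st x - (if IsHMid st x then 1 else 0)

/-- `φ_HP(S) = D`: the Dyck path `D` is obtained from the Schröder path `S` by
replacing each horizontal step by an up-step followed by a down-step. -/
def PhiHPEq {L L' : ℕ} (st : Fin L → Fin 3) (s : Fin L' → Bool) : Prop :=
  ∀ x ∈ Finset.range (L' + 1),
    pht s x = schHeight st x + (if IsHMid st x then 1 else 0)

/-! ### Young diagrams, excited and pleasant diagrams, reverse plane partitions. -/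

/-- The cells (1-based, matrix coordinates) of the staircase `δ_m = (m-1, m-2, …, 1)`. -/
def deltaCells (m : ℕ) : Finset (ℕ × ℕ) :=
  ((Finset.Icc 1 m) ×ˢ (Finset.Icc 1 m)).filter fun c => c.1 + c.2 ≤ m

/-- An excited move inside the Young diagram `lam`. -/
def ExcitedStep (lam : Finset (ℕ × ℕ)) (D D' : Finset (ℕ × ℕ)) : Prop :=
  ∃ i j : ℕ, (i, j) ∈ D ∧ (i + 1, j) ∉ D ∧ (i, j + 1) ∉ D ∧ (i + 1, j + 1) ∉ D ∧
    (i + 1, j + 1) ∈ lam ∧ D' = insert (i + 1, j + 1) (D.erase (i, j))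

/-- `D` is an excited diagram of `lam/mu`. -/
def IsExcited (lam mu D : Finset (ℕ × ℕ)) : Prop :=
  Relation.ReflTransGen (ExcitedStep lam) mu D

/-- `P` is a pleasant diagram of `lam/mu`: a subset of `lam \ D` for an excited diagram `D`. -/
def IsPleasant (lam mu : Finset (ℕ × ℕ)) (P : Finset (ℕ × ℕ)) : Prop :=
  ∃ D, IsExcited lam mu D ∧ P ⊆ lam \ D

/-- `p(lam/mu)`, the number of pleasant diagrams of `lam/mu`. -/
def pleasantCount (lam mu : Finset (ℕ × ℕ)) : ℕ :=
  Set.ncard {P : Finset (ℕ × ℕ) | IsPleasant lam mu P}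

/-- A reverse plane partition on the skew shape `shape`: a filling by nonnegative
integers (vanishing off the shape) weakly increasing along rows and columns. -/
def IsRPP (shape : Finset (ℕ × ℕ)) (f : ℕ × ℕ → ℕ) : Prop :=
  (∀ c, c ∉ shape → f c = 0) ∧
    (∀ i j : ℕ, (i, j) ∈ shape → (i, j + 1) ∈ shape → f (i, j) ≤ f (i, j + 1)) ∧
    ∀ i j : ℕ, (i, j) ∈ shape → (i + 1, j) ∈ shape → f (i, j) ≤ f (i + 1, j)

/-- `∑_{π ∈ RPP(shape)} q^{|π|}` as a formal power series in `q`. -/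
def rppGF (shape : Finset (ℕ × ℕ)) : PowerSeries ℚ :=
  PowerSeries.mk fun N =>
    (Set.ncard {f : ℕ × ℕ → ℕ | IsRPP shape f ∧ ∑ c ∈ shape, f c = N} : ℚ)

/-- `(q; q)_m = ∏_{i=1}^m (1 - q^i)` as a formal power series. -/
def pochPS (m : ℕ) : PowerSeries ℚ :=
  ∏ i ∈ Finset.Icc 1 m, (1 - (PowerSeries.X : PowerSeries ℚ) ^ i)

/-- `E*_N(q) = ∑_{π ∈ Alt_N} q^{maj(κ_N π⁻¹)}` as a formal power series. -/
def EstarPS (N : ℕ) : PowerSeries ℚ :=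
  ∑ π ∈ altPerms N, (PowerSeries.X : PowerSeries ℚ) ^ majKappaInv N π

/-- `E*_m(q)/(q;q)_m` for `m ≥ 0`, and `0` for `m < 0`. -/
def EstarEntry (m : ℤ) : PowerSeries ℚ :=
  if m < 0 then 0 else EstarPS m.toNat * (pochPS m.toNat)⁻¹

/-- The Gaussian binomial coefficient `[N choose M]_q` as a formal power series. -/
def gaussPS (N M : ℕ) : PowerSeries ℚ :=
  pochPS N * (pochPS M * pochPS (N - M))⁻¹

section Determinants

variable {R : Type*} [CommRing R] {k L : ℕ}

lemma det_eq_of_row_add_next (A B : Matrix (Fin k) (Fin k) R) (c : Fin k → R)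
    (h₁ : ∀ p p' : Fin k, (p' : ℕ) = p + 1 → ∀ j, B p j = A p j + c p * A p' j)
    (h₂ : ∀ p : Fin k, (p : ℕ) + 1 = k → ∀ j, B p j = A p j) : B.det = A.det := by
  let U : Matrix (Fin k) (Fin k) R := Matrix.of fun p p' =>
    if p = p' then 1 else if (p' : ℕ) = p + 1 then c p else 0
  have hU : U.det = 1 := by
    rw [Matrix.det_of_isUpperTriangular]
    · simp [U]
    · intro p p' h
      have h : p' < p := h
      have : (p' : ℕ) < p := h
      simp only [U, Matrix.of_apply]
      rw [if_neg (by rintro rfl; omega), if_neg (by omega)]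
  have hB : B = U * A := by
    ext p j
    rw [Matrix.mul_apply]
    by_cases hp : (p : ℕ) + 1 < k
    · rw [h₁ p ⟨p + 1, hp⟩ rfl, Finset.sum_eq_add p ⟨p + 1, hp⟩]
      · simp [U, Fin.ext_iff]
      · simp [Fin.ext_iff]
      · rintro c - ⟨hc, hc'⟩
        simp only [Fin.ext_iff, ne_eq] at hc hc'
        simp only [U, Matrix.of_apply, Fin.ext_iff]
        rw [if_neg (by omega), if_neg (by omega), zero_mul]
      · simp
      · simp
    · rw [h₂ p (by omega), Finset.sum_eq_single p]
      · simp [U]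
      · intro c _ hc
        simp only [Fin.ext_iff, ne_eq] at hc
        simp only [U, Matrix.of_apply, Fin.ext_iff]
        rw [if_neg (by omega), if_neg (by omega), zero_mul]
      · simp
  rw [hB, Matrix.det_mul, hU, one_mul]

lemma det_eq_of_row_add_prev (A B : Matrix (Fin k) (Fin k) R) (c : Fin k → R)
    (h₁ : ∀ p p' : Fin k, (p : ℕ) = p' + 1 → ∀ j, B p j = A p j + c p * A p' j)
    (h₂ : ∀ p : Fin k, (p : ℕ) = 0 → ∀ j, B p j = A p j) : B.det = A.det := by
  rw [← Matrix.det_submatrix_equiv_self Fin.revPerm A,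
    ← Matrix.det_submatrix_equiv_self Fin.revPerm B]
  refine det_eq_of_row_add_next _ _ (fun p => c p.rev) (fun p p' h j => ?_) (fun p h j => ?_)
  · simp only [Matrix.submatrix_apply, Fin.revPerm_apply]
    exact h₁ _ _ (by simp only [Fin.val_rev]; omega) _
  · simp only [Matrix.submatrix_apply, Fin.revPerm_apply]
    exact h₂ _ (by simp only [Fin.val_rev]; omega) _

lemma sum_piFinset_det (s : Fin k → Finset (Fin L)) (g : Fin k → Fin L → Fin k → R) :
    ∑ x ∈ Fintype.piFinset s, (Matrix.of fun p => g p (x p)).det =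
      (Matrix.of fun p => ∑ z ∈ s p, g p z).det := by
  have := (Matrix.detRowAlternating (n := Fin k) (R := R)).toMultilinearMap.map_sum_finset g s
  exact this.symm

lemma Iic_eq_union_Ioc {x y : Fin L} (h : x ≤ y) :
    Finset.Iic y = Finset.Ioc x y ∪ Finset.Iic x ∧ Disjoint (Finset.Ioc x y) (Finset.Iic x) := by
  constructor
  · ext z
    simp only [Finset.mem_union, Finset.mem_Iic, Finset.mem_Ioc]
    constructor
    · intro hz
      rcases lt_or_ge x z with h1 | h1
      · exact Or.inl ⟨h1, hz⟩
      · exact Or.inr h1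
    · rintro (h1 | h1)
      · exact h1.2
      · exact h1.trans h
  · rw [Finset.disjoint_left]
    intro z hz hz'
    simp only [Finset.mem_Iic, Finset.mem_Ioc] at hz hz'
    exact absurd hz' (not_le.mpr hz.1)

variable [NeZero L]

/-- The values a particle can take one step after `b`, when it is active from index `a` on:
particle `p` lies in `[b p, b (p + 1))`. -/
def upSet (a : ℕ) (b : Fin k → Fin L) (p : Fin k) : Finset (Fin L) :=
  if (p : ℕ) < a then {0}
  else Finset.univ.filter fun z => b p ≤ z ∧ ∀ p' : Fin k, (p' : ℕ) = p + 1 → z < b p'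

/-- The values a particle can take one step after `x`, when `x` is active from index `a'` on and
the new particles from index `a` on: particle `p` lies in `(x (p - 1), x p]`. -/
def lowSet (a' a : ℕ) (x : Fin k → Fin L) (p : Fin k) : Finset (Fin L) :=
  if (p : ℕ) < a then {0}
  else Finset.univ.filter fun z => z ≤ x p ∧
    ∀ p' : Fin k, (p : ℕ) = p' + 1 → a' ≤ (p' : ℕ) → x p' < z

lemma sum_upSet_det (V : Fin k → Fin k → R) (f : Fin L → Fin k → R) (a : ℕ)
    (b : Fin k → Fin L) (hb : Monotone b) :
    ∑ x ∈ Fintype.piFinset (upSet a b),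
        (Matrix.of fun p : Fin k => if (p : ℕ) < a then V p else f (x p)).det =
      (Matrix.of fun p : Fin k =>
        if (p : ℕ) < a then V p else ∑ z ∈ Finset.Ici (b p), f z).det := by
  rw [sum_piFinset_det (upSet a b) fun p z => if (p : ℕ) < a then V p else f z]
  refine det_eq_of_row_add_next _ _ (fun p => if (p : ℕ) < a then 0 else -1)
    (fun p p' h j => ?_) (fun p h j => ?_)
  · by_cases hp : (p : ℕ) < a
    · simp [hp, upSet]
    · have hp' : ¬ (p' : ℕ) < a := by omega
      have hle : b p ≤ b p' := hb (by rw [Fin.le_def]; omega)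
      have hset : upSet a b p = Finset.Ico (b p) (b p') := by
        ext z
        simp only [upSet, if_neg hp, Finset.mem_filter, Finset.mem_univ, true_and, Finset.mem_Ico]
        refine and_congr_right fun _ => ⟨fun H => H p' h, fun H p'' h'' => ?_⟩
        rwa [show p'' = p' from Fin.ext (by omega)]
      have hun : Finset.Ici (b p) = Finset.Ico (b p) (b p') ∪ Finset.Ici (b p') := by
        ext z
        simp only [Finset.mem_union, Finset.mem_Ici, Finset.mem_Ico]
        constructor
        · intro hz
          rcases lt_or_ge z (b p') with h1 | h1
          · exact Or.inl ⟨hz, h1⟩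
          · exact Or.inr h1
        · rintro (h1 | h1)
          · exact h1.1
          · exact hle.trans h1
      have hdis : Disjoint (Finset.Ico (b p) (b p')) (Finset.Ici (b p')) := by
        rw [Finset.disjoint_left]
        intro z hz hz'
        simp only [Finset.mem_Ici, Finset.mem_Ico] at hz hz'
        exact absurd hz' (not_le.mpr hz.2)
      simp only [Matrix.of_apply, if_neg hp, if_neg hp', hset, hun, Finset.sum_union hdis,
        Pi.add_apply, Finset.sum_apply]
      ring
  · by_cases hp : (p : ℕ) < a
    · simp [hp, upSet]
    · have hset : upSet a b p = Finset.Ici (b p) := by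
        ext z
        simp only [upSet, if_neg hp, Finset.mem_filter, Finset.mem_univ, true_and, Finset.mem_Ici]
        refine and_iff_left_of_imp fun _ p'' h'' => ?_
        have := p''.isLt
        omega
      simp [hp, hset]

lemma lowSet_eq_Ioc {a' a : ℕ} (x : Fin k → Fin L) {p p' : Fin k} (hp : ¬ (p : ℕ) < a)
    (h : (p : ℕ) = p' + 1) (hp' : a' ≤ (p' : ℕ)) :
    lowSet a' a x p = Finset.Ioc (x p') (x p) := by
  ext z
  simp only [lowSet, if_neg hp, Finset.mem_filter, Finset.mem_univ, true_and, Finset.mem_Ioc]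
  rw [and_comm]
  refine and_congr_left fun _ => ⟨fun H => H p' h hp', fun H p'' h'' _ => ?_⟩
  rwa [show p'' = p' from Fin.ext (by omega)]

lemma lowSet_eq_Iic {a : ℕ} (x : Fin k → Fin L) {p : Fin k} (h : (p : ℕ) = a) :
    lowSet a a x p = Finset.Iic (x p) := by
  ext z
  simp only [lowSet, h, lt_irrefl, if_false, Finset.mem_filter, Finset.mem_univ, true_and,
    Finset.mem_Iic]
  refine and_iff_left_of_imp fun _ p'' h'' h3 => ?_
  omega

lemma sum_lowSet_det (V : Fin k → Fin k → R) (f : Fin L → Fin k → R) (a : ℕ)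
    (x : Fin k → Fin L) (hx : Monotone x) :
    ∑ b ∈ Fintype.piFinset (lowSet a a x),
        (Matrix.of fun p : Fin k => if (p : ℕ) < a then V p else f (b p)).det =
      (Matrix.of fun p : Fin k =>
        if (p : ℕ) < a then V p else ∑ z ∈ Finset.Iic (x p), f z).det := by
  rw [sum_piFinset_det (lowSet a a x) fun p z => if (p : ℕ) < a then V p else f z]
  refine det_eq_of_row_add_prev _ _ (fun p => if (p : ℕ) ≤ a then 0 else -1)
    (fun p p' h j => ?_) (fun p h j => ?_)
  · rcases lt_trichotomy (p : ℕ) a with hp | hp | hp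
    · simp [hp, hp.le, lowSet]
    · simp only [Matrix.of_apply, lowSet_eq_Iic x hp, hp, lt_irrefl, if_false, le_refl, if_true,
        zero_mul, add_zero]
    · have h1 := Iic_eq_union_Ioc (hx (show p' ≤ p by rw [Fin.le_def]; omega))
      rw [Matrix.of_apply, lowSet_eq_Ioc x (not_lt.mpr hp.le) h (by omega)]
      simp only [Matrix.of_apply, if_neg (not_lt.mpr hp.le), if_neg (not_le.mpr hp), h1.1,
        if_neg (show ¬ (p' : ℕ) < a by omega), Finset.sum_union h1.2, Pi.add_apply,
        Finset.sum_apply]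
      ring
  · rcases lt_or_ge (p : ℕ) a with hp | hp
    · simp [hp, lowSet]
    · have hp : (p : ℕ) = a := by omega
      simp only [Matrix.of_apply, lowSet_eq_Iic x hp, hp, lt_irrefl, if_false]

lemma sum_lowSet_det_birth (f : Fin L → Fin k → R) (a : ℕ) (ha : a < k)
    (hf : ∀ z (j : Fin k), (j : ℕ) ≤ a → f z j = 0) (x : Fin k → Fin L) (hx : Monotone x) :
    ∑ b ∈ Fintype.piFinset (lowSet a (a + 1) x),
        (Matrix.of fun p : Fin k => if (p : ℕ) < a + 1 then Pi.single p 1 else f (b p)).det =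
      (Matrix.of fun p : Fin k => if (p : ℕ) < a then Pi.single p 1
        else Pi.single ⟨a, ha⟩ 1 + ∑ z ∈ Finset.Iic (x p), f z).det := by
  rw [sum_piFinset_det (lowSet a (a + 1) x)
    fun p z => if (p : ℕ) < a + 1 then Pi.single p 1 else f z]
  let C : Matrix (Fin k) (Fin k) R := Matrix.of fun p =>
    if (p : ℕ) < a then Pi.single p 1
    else if (p : ℕ) = a then Pi.single ⟨a, ha⟩ 1 + ∑ z ∈ Finset.Iic (x p), f z
    else ∑ z ∈ lowSet a (a + 1) x p, f z
  trans C.det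
  · let B : Matrix (Fin k) (Fin k) R := Matrix.of fun p =>
      ∑ z ∈ lowSet a (a + 1) x p, if (p : ℕ) < a + 1 then Pi.single p 1 else f z
    have hB : B = B.updateRow ⟨a, ha⟩ (Pi.single ⟨a, ha⟩ 1) := by
      ext p j
      by_cases hp : p = ⟨a, ha⟩
      · subst hp
        simp [B, lowSet]
      · rw [Matrix.updateRow_ne hp]
    have hC : C = B.updateRow ⟨a, ha⟩
        (Pi.single ⟨a, ha⟩ 1 + ∑ z ∈ Finset.Iic (x ⟨a, ha⟩), f z) := by
      ext p j
      by_cases hp : p = ⟨a, ha⟩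
      · subst hp
        simp [C]
      · rw [Matrix.updateRow_ne hp]
        have hp' : (p : ℕ) ≠ a := fun h => hp (Fin.ext h)
        rcases lt_or_gt_of_ne hp' with h | h
        · simp [B, C, h, h.le, lowSet]
        · simp [B, C, hp', not_lt.mpr h.le, not_le.mpr h]
    have hz : (B.updateRow ⟨a, ha⟩ (∑ z ∈ Finset.Iic (x ⟨a, ha⟩), f z)).det = 0 := by
      refine Matrix.det_eq_zero_of_column_eq_zero ⟨a, ha⟩ fun p => ?_
      by_cases hp : p = ⟨a, ha⟩
      · subst hp
        rw [Matrix.updateRow_self, Finset.sum_apply]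
        exact Finset.sum_eq_zero fun z _ => hf z _ le_rfl
      · rw [Matrix.updateRow_ne hp]
        have hp' : (p : ℕ) ≠ a := fun h => hp (Fin.ext h)
        simp only [B, Matrix.of_apply, Finset.sum_apply]
        refine Finset.sum_eq_zero fun z _ => ?_
        split_ifs
        · exact Pi.single_eq_of_ne (Ne.symm hp) _
        · exact hf z _ le_rfl
    change B.det = _
    rw [hC, Matrix.det_updateRow_add, hz, add_zero, ← hB]
  · refine det_eq_of_row_add_prev _ _ (fun p => if (p : ℕ) ≤ a then 0 else -1)
      (fun p p' h j => ?_) (fun p h j => ?_)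
    · rcases lt_trichotomy (p : ℕ) a with hp | hp | hp
      · simp [C, hp, hp.le]
      · simp [C, hp]
      · have h1 := Iic_eq_union_Ioc (hx (show p' ≤ p by rw [Fin.le_def]; omega))
        simp only [C, Matrix.of_apply, if_neg (not_lt.mpr hp.le), if_neg hp.ne',
          lowSet_eq_Ioc (a' := a) (a := a + 1) x (by omega : ¬ (p : ℕ) < a + 1) h (by omega),
          if_neg (not_le.mpr hp), h1.1,
          if_neg (show ¬ (p' : ℕ) < a by omega), Finset.sum_union h1.2, Pi.add_apply,
          Finset.sum_apply]
        ring
    · rcases lt_or_ge (p : ℕ) a with hp | hp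
      · simp [C, hp]
      · have hp : (p : ℕ) = a := by omega
        simp [C, hp]

end Determinants

section Sweep

variable {R : Type*} [CommRing R] (q : R) (L : ℕ) [NeZero L]

/-- The generating function of truncated zigzag fillings with `m` valleys, by first value. -/
def zigzagPeak : ℕ → Fin L → R
  | 0, _ => 1
  | m + 1, x => ∑ b ∈ Finset.Iic x, q ^ (b : ℕ) * ∑ z ∈ Finset.Ici b, q ^ (z : ℕ) * zigzagPeak m z

/-- The generating function of truncated zigzag fillings, by a lower bound on the first value. -/
def zigzagValley (m : ℕ) (b : Fin L) : R :=
  ∑ z ∈ Finset.Ici b, q ^ (z : ℕ) * zigzagPeak q L m z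

/-- The index of the first active particle on the `r`-th valley diagonal. -/
def valleyStart (n k r : ℕ) : ℕ := max (k - r) (r + 1 - n - k)

/-- The index of the first active particle on the `r`-th peak diagonal. -/
def peakStart (n k r : ℕ) : ℕ := max (k - 1 - r) (r + 1 - n - k)

/-- The rows of the sweep matrix belonging to inactive particles. -/
def frozenRow (n k r : ℕ) (p : Fin k) : Fin k → R :=
  if r < k then Pi.single p 1 else fun j => zigzagValley q L (n + p + j) 0

/-- The rows of the sweep matrix belonging to active particles on a valley diagonal. -/
def valleyRow (k r : ℕ) (z : Fin L) (j : Fin k) : R :=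
  if k ≤ j + r then zigzagValley q L (j + r - k) z else 0

/-- The rows of the sweep matrix belonging to active particles on a peak diagonal. -/
def peakRow (k r : ℕ) (z : Fin L) (j : Fin k) : R :=
  if k ≤ j + r + 1 then zigzagPeak q L (j + r + 1 - k) z else 0

/-- The sweep determinant on the `r`-th valley diagonal. -/
def valleyDet (n k r : ℕ) (b : Fin k → Fin L) : R :=
  (Matrix.of fun p : Fin k =>
    if (p : ℕ) < valleyStart n k r then frozenRow q L n k r p else valleyRow q L k r (b p)).det

/-- The sweep determinant on the `r`-th peak diagonal. -/
def peakDet (n k r : ℕ) (x : Fin k → Fin L) : R :=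
  (Matrix.of fun p : Fin k =>
    if (p : ℕ) < peakStart n k r then frozenRow q L n k r p else peakRow q L k r (x p)).det

variable {L}

lemma pow_sum_mul_det {k : ℕ} (a : ℕ) (V : Fin k → Fin k → R) (f : Fin L → Fin k → R)
    (y : Fin k → Fin L) (hy : ∀ p : Fin k, (p : ℕ) < a → y p = 0) :
    q ^ (∑ p, (y p : ℕ)) *
        (Matrix.of fun p : Fin k => if (p : ℕ) < a then V p else f (y p)).det =
      (Matrix.of fun p : Fin k =>
        if (p : ℕ) < a then V p else fun j => q ^ (y p : ℕ) * f (y p) j).det := by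
  rw [← Finset.prod_pow_eq_pow_sum, ← Matrix.det_mul_column]
  congr 1
  ext p j
  by_cases hp : (p : ℕ) < a
  · simp [hp, hy p hp]
  · simp [hp]

lemma apply_eq_zero_of_mem_upSet {k a : ℕ} {b x : Fin k → Fin L}
    (hx : x ∈ Fintype.piFinset (upSet a b)) (p : Fin k) (hp : (p : ℕ) < a) : x p = 0 := by
  simpa [upSet, hp] using Fintype.mem_piFinset.mp hx p

lemma apply_eq_zero_of_mem_lowSet {k a a' : ℕ} {b x : Fin k → Fin L}
    (hb : b ∈ Fintype.piFinset (lowSet a' a x)) (p : Fin k) (hp : (p : ℕ) < a) : b p = 0 := by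
  simpa [lowSet, hp] using Fintype.mem_piFinset.mp hb p

lemma sum_lowSet_valleyDet (n k r : ℕ) (x : Fin k → Fin L) (hx : Monotone x) :
    ∑ b ∈ Fintype.piFinset (lowSet (peakStart n k r) (valleyStart n k r) x),
        q ^ (∑ p, (b p : ℕ)) * valleyDet q L n k r b = peakDet q L n k r x := by
  simp only [valleyDet, peakDet]
  rw [Finset.sum_congr rfl fun b hb => pow_sum_mul_det q _ _ _ b (apply_eq_zero_of_mem_lowSet hb)]
  by_cases hr : r < k
  · have h1 : valleyStart n k r = peakStart n k r + 1 := by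
      simp only [valleyStart, peakStart]; omega
    have h2 : peakStart n k r = k - 1 - r := by simp only [peakStart]; omega
    have ha : peakStart n k r < k := by omega
    rw [h1]
    have := sum_lowSet_det_birth (fun (z : Fin L) j => q ^ (z : ℕ) * valleyRow q L k r z j)
      (peakStart n k r) ha (fun z j hj => by
        rw [valleyRow, if_neg (by omega), mul_zero]) x hx
    simp only [frozenRow, if_pos hr]
    rw [this]
    congr 1
    ext p j
    simp only [Matrix.of_apply]
    split_ifs with hp
    · rfl
    · rw [Pi.add_apply, Finset.sum_apply, peakRow]
      rcases lt_trichotomy ((j : ℕ) + r + 1) k with h | h | h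
      · rw [if_neg (by omega), Pi.single_eq_of_ne, Finset.sum_eq_zero, add_zero]
        · intro z _
          rw [valleyRow, if_neg (by omega), mul_zero]
        · simp only [ne_eq, Fin.ext_iff]; omega
      · rw [if_pos h.ge, show j = ⟨_, ha⟩ from Fin.ext (by simp only; omega), Pi.single_eq_same,
          Finset.sum_eq_zero, add_zero]
        · simp only [h2]
          rw [show k - 1 - r + r + 1 - k = 0 by omega]
          rfl
        · intro z _
          rw [valleyRow, if_neg (by simp only; omega), mul_zero]
      · rw [if_pos h.le, Pi.single_eq_of_ne, zero_add,
          show (j : ℕ) + r + 1 - k = (j + r - k) + 1 by omega, zigzagPeak]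
        · refine Finset.sum_congr rfl fun z _ => ?_
          rw [valleyRow, if_pos (by omega), zigzagValley]
        · simp only [ne_eq, Fin.ext_iff]; omega
  · have h1 : valleyStart n k r = peakStart n k r := by
      simp only [valleyStart, peakStart]; omega
    rw [h1, sum_lowSet_det _ (fun (z : Fin L) j => q ^ (z : ℕ) * valleyRow q L k r z j) _ _ hx]
    congr 1
    ext p j
    simp only [Matrix.of_apply]
    split_ifs with hp
    · rfl
    · rw [Finset.sum_apply, peakRow, if_pos (by omega),
          show (j : ℕ) + r + 1 - k = (j + r - k) + 1 by omega, zigzagPeak]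
      refine Finset.sum_congr rfl fun z _ => ?_
      rw [valleyRow, if_pos (by omega), zigzagValley]

lemma sum_upSet_peakDet (n k r : ℕ) (b : Fin k → Fin L) (hb : Monotone b)
    (hb₀ : ∀ p : Fin k, (p : ℕ) < valleyStart n k (r + 1) → b p = 0) :
    ∑ x ∈ Fintype.piFinset (upSet (peakStart n k r) b),
        q ^ (∑ p, (x p : ℕ)) * peakDet q L n k r x = valleyDet q L n k (r + 1) b := by
  simp only [valleyDet, peakDet]
  rw [Finset.sum_congr rfl fun x hx => pow_sum_mul_det q _ _ _ x (apply_eq_zero_of_mem_upSet hx),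
    sum_upSet_det _ (fun (z : Fin L) j => q ^ (z : ℕ) * peakRow q L k r z j) _ _ hb]
  congr 1
  ext p j
  simp only [Matrix.of_apply]
  have hrow : (∑ z ∈ Finset.Ici (b p), fun j => q ^ (z : ℕ) * peakRow q L k r z j) j =
      valleyRow q L k (r + 1) (b p) j := by
    rw [Finset.sum_apply, valleyRow]
    split_ifs with h
    · rw [zigzagValley]
      refine Finset.sum_congr rfl fun z _ => ?_
      rw [peakRow, if_pos (by omega)]
      rfl
    · refine Finset.sum_eq_zero fun z _ => ?_
      rw [peakRow, if_neg (by omega), mul_zero]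
  by_cases hp : (p : ℕ) < peakStart n k r
  · rw [if_pos hp, if_pos (by simp only [valleyStart, peakStart] at *; omega)]
    simp only [frozenRow]
    by_cases hr : r + 1 < k
    · rw [if_pos (by omega), if_pos hr]
    · rw [if_neg hr, if_neg (by simp only [peakStart] at hp; have := p.isLt; omega)]
  · rw [if_neg hp, hrow]
    split_ifs with h
    · have hr : ¬ r + 1 < k := by
        intro hr
        simp only [valleyStart, peakStart] at hp h
        omega
      rw [frozenRow, if_neg hr, valleyRow, if_pos (by omega), hb₀ p h]
      congr 1
      simp only [valleyStart, peakStart] at hp h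
      have := p.isLt
      omega
    · rfl

end Sweep

section Chains

/-- The sequences of `t + 1` states ending in `s` in which each state is allowed by `P` to precede
the next one. -/
def chainsOf {S : Type*} [Fintype S] (P : ℕ → S → Finset S) (t : ℕ) (s : S) :
    Finset (Fin (t + 1) → S) :=
  Finset.univ.filter fun y => y (Fin.last t) = s ∧ ∀ i : Fin t, y i.castSucc ∈ P i (y i.succ)

lemma sum_chainsOf_succ {R S : Type*} [CommRing R] [Fintype S] (P : ℕ → S → Finset S) (w : S → R)
    (t : ℕ) (s : S) :
    ∑ y ∈ chainsOf P (t + 1) s, ∏ i : Fin (t + 1), w (y i.castSucc) =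
      ∑ s' ∈ P t s, w s' * ∑ y ∈ chainsOf P t s', ∏ i : Fin t, w (y i.castSucc) := by
  simp only [chainsOf]
  simp only [Finset.mul_sum]
  rw [Finset.sum_sigma']
  refine Finset.sum_bij' (fun y _ => ⟨y (Fin.last t).castSucc, fun i => y i.castSucc⟩)
    (fun z _ => Fin.snoc (α := fun _ => S) z.2 s) ?_ ?_ ?_ ?_ ?_
  · intro y hy
    simp only [Finset.mem_filter, Finset.mem_univ, true_and] at hy
    simp only [Finset.mem_sigma, Finset.mem_filter, Finset.mem_univ, true_and]
    refine ⟨?_, fun i => ?_⟩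
    · have := hy.2 (Fin.last t)
      rwa [Fin.succ_last, hy.1] at this
    · exact hy.2 i.castSucc
  · rintro ⟨s', z⟩ hz
    simp only [Finset.mem_sigma, Finset.mem_filter, Finset.mem_univ, true_and] at hz
    simp only [Finset.mem_filter, Finset.mem_univ, true_and, Fin.snoc_last]
    refine fun i => ?_
    induction i using Fin.lastCases with
    | last =>
      rw [Fin.snoc_castSucc, Fin.succ_last, Fin.snoc_last, hz.2.1]
      exact hz.1
    | cast i =>
      rw [Fin.snoc_castSucc, ← Fin.castSucc_succ, Fin.snoc_castSucc]
      exact hz.2.2 i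
  · intro y hy
    simp only [Finset.mem_filter, Finset.mem_univ, true_and] at hy
    ext i
    induction i using Fin.lastCases with
    | last => simp [hy.1]
    | cast i => simp
  · rintro ⟨s', z⟩ hz
    simp only [Finset.mem_sigma, Finset.mem_filter, Finset.mem_univ, true_and] at hz
    simp [hz.2.1]
  · intro y _
    rw [Fin.prod_univ_castSucc, mul_comm]

variable {R : Type*} [CommRing R] (q : R) {L : ℕ} [NeZero L]

/-- The index of the first active particle at time `t`. -/
def chainStart (n k t : ℕ) : ℕ :=
  if t % 2 = 0 then valleyStart n k (t / 2) else peakStart n k (t / 2)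

/-- The states at time `t` that may precede the state `y` at time `t + 1`. -/
def chainPred (n k t : ℕ) (y : Fin k → Fin L) : Finset (Fin k → Fin L) :=
  if t % 2 = 0 then
    Fintype.piFinset (lowSet (peakStart n k (t / 2)) (valleyStart n k (t / 2)) y)
  else Fintype.piFinset (upSet (peakStart n k (t / 2)) y)

/-- The chains of states ending in `y` at time `t`. -/
def chains (n k t : ℕ) (y : Fin k → Fin L) : Finset (Fin (t + 1) → Fin k → Fin L) :=
  chainsOf (chainPred n k) t y

lemma monotone_of_mem_chainPred {n k t : ℕ} {y y' : Fin k → Fin L} (hy' : Monotone y')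
    (h : y ∈ chainPred n k t y') : Monotone y := by
  intro p p' hpp
  rcases hpp.eq_or_lt with rfl | hlt
  · exact le_rfl
  have hlt' : (p : ℕ) < p' := hlt
  unfold chainPred at h
  split_ifs at h with ht
  · have h1 := Fintype.mem_piFinset.mp h p
    have h2 := Fintype.mem_piFinset.mp h p'
    by_cases hp : (p : ℕ) < valleyStart n k (t / 2)
    · rw [apply_eq_zero_of_mem_lowSet h p hp]
      exact Fin.zero_le _
    · have hs : peakStart n k (t / 2) ≤ valleyStart n k (t / 2) := by
        simp only [peakStart, valleyStart]; omega
      simp only [lowSet, if_neg hp, if_neg (show ¬ (p' : ℕ) < valleyStart n k (t / 2) by omega),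
        Finset.mem_filter, Finset.mem_univ, true_and] at h1 h2
      have h3 := h2.2 ⟨p' - 1, by omega⟩ (by simp only; omega) (by simp only; omega)
      exact (h1.1.trans (hy' (by rw [Fin.le_def]; simp only; omega))).trans h3.le
  · have h1 := Fintype.mem_piFinset.mp h p
    have h2 := Fintype.mem_piFinset.mp h p'
    by_cases hp : (p : ℕ) < peakStart n k (t / 2)
    · rw [apply_eq_zero_of_mem_upSet h p hp]
      exact Fin.zero_le _
    · simp only [upSet, if_neg hp, if_neg (show ¬ (p' : ℕ) < peakStart n k (t / 2) by omega),
        Finset.mem_filter, Finset.mem_univ, true_and] at h1 h2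
      have h3 := h1.2 ⟨p + 1, by omega⟩ rfl
      exact (h3.le.trans (hy' (by rw [Fin.le_def]; simp only; omega))).trans h2.1

lemma apply_eq_zero_of_mem_chainPred {n k t : ℕ} {y y' : Fin k → Fin L}
    (h : y ∈ chainPred n k t y') (p : Fin k) (hp : (p : ℕ) < chainStart n k t) : y p = 0 := by
  unfold chainPred at h
  unfold chainStart at hp
  split_ifs at h with ht
  · exact apply_eq_zero_of_mem_lowSet h p (by rwa [if_pos ht] at hp)
  · exact apply_eq_zero_of_mem_upSet h p (by rwa [if_neg ht] at hp)

lemma sum_chains_eq_sweepDet (n k t : ℕ) (hk : 0 < k) (y : Fin k → Fin L) (hy : Monotone y)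
    (hy₀ : ∀ p : Fin k, (p : ℕ) < chainStart n k t → y p = 0) :
    ∑ c ∈ chains n k t y, ∏ i : Fin t, q ^ (∑ p, (c i.castSucc p : ℕ)) =
      if t % 2 = 0 then valleyDet q L n k (t / 2) y else peakDet q L n k (t / 2) y := by
  induction t generalizing y with
  | zero =>
    have : chains n k 0 y = {fun _ => y} := by
      ext c
      simp only [chains, chainsOf, Finset.mem_filter, Finset.mem_univ, true_and,
        Finset.mem_singleton]
      constructor
      · rintro ⟨h, -⟩
        ext i : 1
        rw [← h, Subsingleton.elim (α := Fin 1) i (Fin.last 0)]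
      · rintro rfl
        exact ⟨rfl, fun i => i.elim0⟩
    rw [this]
    simp only [Finset.univ_eq_empty, Finset.prod_empty, Finset.sum_singleton, valleyDet]
    rw [if_pos (by norm_num), ← Matrix.det_one (n := Fin k)]
    congr 1
    ext p j
    simp only [Matrix.of_apply]
    rw [if_pos (by have := p.isLt; simp only [valleyStart]; omega), frozenRow,
      if_pos (by simpa using hk), Matrix.one_apply, Pi.single_apply]
    simp only [eq_comm]
  | succ t ih =>
    have hrec := sum_chainsOf_succ (chainPred n k)
      (fun s : Fin k → Fin L => q ^ (∑ p, (s p : ℕ))) t y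
    unfold chains at ih ⊢
    rw [hrec, Finset.sum_congr rfl fun s hs => congrArg _ (ih s (monotone_of_mem_chainPred hy hs)
      (apply_eq_zero_of_mem_chainPred hs))]
    rcases Nat.mod_two_eq_zero_or_one t with ht | ht
    · have h1 : (t + 1) / 2 = t / 2 := by omega
      rw [if_neg (by omega), h1, ← sum_lowSet_valleyDet q n k _ y hy]
      simp only [ht, if_true, chainPred]
    · have h1 : (t + 1) / 2 = t / 2 + 1 := by omega
      have h2 : (t + 1) % 2 = 0 := by omega
      simp only [chainStart, h1, h2, if_true] at hy₀
      rw [if_pos h2, h1, ← sum_upSet_peakDet q n k _ y hy hy₀]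
      simp only [ht, one_ne_zero, if_false, chainPred]

lemma sum_chains_eq_hankelDet (n k : ℕ) (hk : 0 < k) :
    ∑ c ∈ chains n k (2 * (n + 2 * k - 1)) (0 : Fin k → Fin L),
        ∏ i : Fin (2 * (n + 2 * k - 1)), q ^ (∑ p, (c i.castSucc p : ℕ)) =
      (Matrix.of fun i j : Fin k => zigzagValley q L (n + i + j) 0).det := by
  rw [sum_chains_eq_sweepDet q n k _ hk 0 (fun _ _ _ => le_rfl) (fun _ _ => rfl),
    if_pos (by omega), valleyDet, Nat.mul_div_cancel_left _ two_pos]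
  congr 1
  ext p j
  simp only [Matrix.of_apply]
  rw [if_pos (by have := p.isLt; simp only [valleyStart]; omega), frozenRow, if_neg (by omega)]

end Chains

section Cells

/-- Whether particle `p` is active at time `t`. -/
def Active (n k t p : ℕ) : Prop :=
  p < k ∧ k ≤ p + (t + 1) / 2 ∧ t / 2 + 1 ≤ n + p + k

/-- The cell of the thickened border strip visited by particle `p` at time `t`. -/
def cellOf (n k t p : ℕ) : ℕ × ℕ := (p + 1 + (t + 1) / 2 - k, n + p + k - t / 2)

/-- The time at which a cell is visited. -/
def timeOf (n k : ℕ) (c : ℕ × ℕ) : ℕ := n + 2 * k - 1 + c.1 - c.2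

/-- The particle visiting a cell. -/
def particleOf (n : ℕ) (c : ℕ × ℕ) : ℕ := (c.1 + c.2 - n - 1) / 2

/-- The conditions on a family `Y t p` of positions equivalent to being a reverse plane partition
shifted by the index of the particle. -/
structure IsChain (n k : ℕ) (Y : ℕ → ℕ → ℕ) : Prop where
  zero : ∀ t p, ¬ Active n k t p → Y t p = 0
  up : ∀ r p, Active n k (2 * r) p → Y (2 * r) p ≤ Y (2 * r + 1) p
  down : ∀ r p, Active n k (2 * r + 1) p → Y (2 * r + 2) p ≤ Y (2 * r + 1) p
  up_lt : ∀ r p, Active n k (2 * r) (p + 1) → Active n k (2 * r + 1) p →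
    Y (2 * r + 1) p < Y (2 * r) (p + 1)
  down_lt : ∀ r p, Active n k (2 * r + 1) p → p + 1 < k → Y (2 * r + 1) p < Y (2 * r + 2) (p + 1)

lemma mem_deltaCells_sdiff {a b : ℕ} {c : ℕ × ℕ} :
    c ∈ deltaCells b \ deltaCells a ↔ 1 ≤ c.1 ∧ 1 ≤ c.2 ∧ a < c.1 + c.2 ∧ c.1 + c.2 ≤ b := by
  simp only [deltaCells, Finset.mem_sdiff, Finset.mem_filter, Finset.mem_product, Finset.mem_Icc]
  omega

variable {n k : ℕ}

lemma cellOf_mem {t p : ℕ} (h : Active n k t p) :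
    cellOf n k t p ∈ deltaCells (n + 2 * k) \ deltaCells n := by
  rw [mem_deltaCells_sdiff]
  simp only [Active, cellOf] at *
  omega

lemma active_of_mem {c : ℕ × ℕ} (h : c ∈ deltaCells (n + 2 * k) \ deltaCells n) :
    Active n k (timeOf n k c) (particleOf n c) := by
  rw [mem_deltaCells_sdiff] at h
  simp only [Active, timeOf, particleOf] at *
  omega

lemma cellOf_timeOf_particleOf {c : ℕ × ℕ} (h : c ∈ deltaCells (n + 2 * k) \ deltaCells n) :
    cellOf n k (timeOf n k c) (particleOf n c) = c := by
  rw [mem_deltaCells_sdiff] at h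
  simp only [cellOf, timeOf, particleOf, Prod.ext_iff] at *
  omega

lemma timeOf_cellOf {t p : ℕ} (h : Active n k t p) : timeOf n k (cellOf n k t p) = t := by
  simp only [Active, cellOf, timeOf] at *
  omega

lemma particleOf_cellOf {t p : ℕ} (h : Active n k t p) : particleOf n (cellOf n k t p) = p := by
  simp only [Active, cellOf, particleOf] at *
  omega

/-- The positions of the particles defined by a filling. -/
def chainOfFilling (n k : ℕ) (f : ℕ × ℕ → ℕ) (t p : ℕ) : ℕ :=
  if Active n k t p then f (cellOf n k t p) + p else 0

/-- The filling defined by the positions of the particles. -/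
def fillingOfChain (n k : ℕ) (Y : ℕ → ℕ → ℕ) (c : ℕ × ℕ) : ℕ :=
  if c ∈ deltaCells (n + 2 * k) \ deltaCells n then
    Y (timeOf n k c) (particleOf n c) - particleOf n c
  else 0

lemma isChain_chainOfFilling {f : ℕ × ℕ → ℕ}
    (hf : IsRPP (deltaCells (n + 2 * k) \ deltaCells n) f) :
    IsChain n k (chainOfFilling n k f) := by
  obtain ⟨-, hrow, hcol⟩ := hf
  have row : ∀ t p t' p', Active n k t p → Active n k t' p' →
      (cellOf n k t' p').1 = (cellOf n k t p).1 → (cellOf n k t' p').2 = (cellOf n k t p).2 + 1 →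
      f (cellOf n k t p) ≤ f (cellOf n k t' p') := by
    intro t p t' p' h h' h1 h2
    have e : cellOf n k t' p' = ((cellOf n k t p).1, (cellOf n k t p).2 + 1) := Prod.ext h1 h2
    have := hrow (cellOf n k t p).1 (cellOf n k t p).2 (cellOf_mem h) (e ▸ cellOf_mem h')
    rwa [← e] at this
  have col : ∀ t p t' p', Active n k t p → Active n k t' p' →
      (cellOf n k t' p').1 = (cellOf n k t p).1 + 1 → (cellOf n k t' p').2 = (cellOf n k t p).2 →
      f (cellOf n k t p) ≤ f (cellOf n k t' p') := by
    intro t p t' p' h h' h1 h2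
    have e : cellOf n k t' p' = ((cellOf n k t p).1 + 1, (cellOf n k t p).2) := Prod.ext h1 h2
    have := hcol (cellOf n k t p).1 (cellOf n k t p).2 (cellOf_mem h) (e ▸ cellOf_mem h')
    rwa [← e] at this
  constructor
  · intro t p h
    rw [chainOfFilling, if_neg h]
  · intro r p h
    have h' : Active n k (2 * r + 1) p := by simp only [Active] at *; omega
    rw [chainOfFilling, chainOfFilling, if_pos h, if_pos h']
    refine Nat.add_le_add_right (col _ _ _ _ h h' ?_ ?_) _ <;>
      simp only [Active, cellOf] at * <;> omega
  · intro r p h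
    rw [chainOfFilling, chainOfFilling, if_pos h]
    split_ifs with h'
    · refine Nat.add_le_add_right (row _ _ _ _ h' h ?_ ?_) _ <;>
        simp only [Active, cellOf] at * <;> omega
    · exact Nat.zero_le _
  · intro r p h h'
    rw [chainOfFilling, chainOfFilling, if_pos h, if_pos h']
    refine Nat.lt_succ_of_le (Nat.add_le_add_right (row _ _ _ _ h' h ?_ ?_) p) <;>
      simp only [Active, cellOf] at * <;> omega
  · intro r p h hp
    have h' : Active n k (2 * r + 2) (p + 1) := by simp only [Active] at *; omega
    rw [chainOfFilling, chainOfFilling, if_pos h, if_pos h']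
    refine Nat.lt_succ_of_le (Nat.add_le_add_right (col _ _ _ _ h h' ?_ ?_) p) <;>
      simp only [Active, cellOf] at * <;> omega

lemma IsChain.le {Y : ℕ → ℕ → ℕ} (hY : IsChain n k Y) {t p : ℕ} (h : Active n k t p) :
    p ≤ Y t p := by
  induction p generalizing t with
  | zero => exact Nat.zero_le _
  | succ p ih =>
    obtain ⟨r, rfl | rfl⟩ := Nat.even_or_odd' t
    · by_cases hr : r + 1 ≤ n + p + k
      · have h' : Active n k (2 * r + 1) p := by simp only [Active] at *; omega
        exact (ih h').trans_lt (hY.up_lt r p h h')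
      · obtain ⟨r, rfl⟩ : ∃ s, r = s + 1 := ⟨r - 1, by simp only [Active] at *; omega⟩
        have h' : Active n k (2 * r + 1) p := by simp only [Active] at *; omega
        exact (ih h').trans_lt (hY.down_lt r p h' h.1)
    · by_cases hr : k ≤ p + r + 1
      · by_cases hr' : r + 1 ≤ n + p + k
        · have h' : Active n k (2 * r + 1) p := by simp only [Active] at *; omega
          exact ((ih h').trans_lt (hY.down_lt r p h' h.1)).trans_le (hY.down r (p + 1) h)
        · have h'' : Active n k (2 * r) (p + 1) := by simp only [Active] at *; omega
          obtain ⟨r, rfl⟩ : ∃ s, r = s + 1 := ⟨r - 1, by simp only [Active] at *; omega⟩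
          have h' : Active n k (2 * r + 1) p := by simp only [Active] at *; omega
          exact ((ih h').trans_lt (hY.down_lt r p h' h.1)).trans_le (hY.up (r + 1) (p + 1) h'')
      · have h' : Active n k (2 * (r + 1) + 1) p := by simp only [Active] at *; omega
        have h'' : Active n k (2 * (r + 1)) (p + 1) := by simp only [Active] at *; omega
        exact ((ih h').trans_lt (hY.up_lt (r + 1) p h'' h')).trans_le (hY.down r (p + 1) h)

lemma isRPP_fillingOfChain {Y : ℕ → ℕ → ℕ} (hY : IsChain n k Y) :
    IsRPP (deltaCells (n + 2 * k) \ deltaCells n) (fillingOfChain n k Y) := by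
  refine ⟨fun c hc => if_neg hc, fun i j h h' => ?_, fun i j h h' => ?_⟩
  · rw [fillingOfChain, fillingOfChain, if_pos h, if_pos h']
    have ha := active_of_mem h
    have ha' := active_of_mem h'
    have hle := hY.le ha
    rw [mem_deltaCells_sdiff] at h h'
    have ht : timeOf n k (i, j) = timeOf n k (i, j + 1) + 1 := by simp only [timeOf] at *; omega
    obtain ⟨r, hr | hr⟩ := Nat.even_or_odd' (timeOf n k (i, j + 1))
    · have hp : particleOf n (i, j + 1) = particleOf n (i, j) + 1 := by
        simp only [timeOf, particleOf] at *; omega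
      rw [ht, hr] at ha hle ⊢
      rw [hr, hp] at ha'
      rw [hp]
      have := hY.up_lt r _ ha' ha
      omega
    · have hp : particleOf n (i, j + 1) = particleOf n (i, j) := by
        simp only [timeOf, particleOf] at *; omega
      rw [hr, hp] at ha'
      rw [ht, hr, hp]
      exact Nat.sub_le_sub_right (hY.down r _ ha') _
  · rw [fillingOfChain, fillingOfChain, if_pos h, if_pos h']
    have ha := active_of_mem h
    have ha' := active_of_mem h'
    have hle := hY.le ha
    rw [mem_deltaCells_sdiff] at h h'
    have ht : timeOf n k (i + 1, j) = timeOf n k (i, j) + 1 := by simp only [timeOf] at *; omega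
    obtain ⟨r, hr | hr⟩ := Nat.even_or_odd' (timeOf n k (i, j))
    · have hp : particleOf n (i + 1, j) = particleOf n (i, j) := by
        simp only [timeOf, particleOf] at *; omega
      rw [hr] at ha
      rw [ht, hr, hp]
      exact Nat.sub_le_sub_right (hY.up r _ ha) _
    · have hp : particleOf n (i + 1, j) = particleOf n (i, j) + 1 := by
        simp only [timeOf, particleOf] at *; omega
      rw [hr] at ha
      rw [hp] at ha'
      rw [ht, hr, hp]
      have := hY.down_lt r _ ha ha'.1
      rw [hr] at hle
      simp only [add_assoc, Nat.reduceAdd] at this ⊢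
      omega

lemma fillingOfChain_chainOfFilling {f : ℕ × ℕ → ℕ}
    (hf : IsRPP (deltaCells (n + 2 * k) \ deltaCells n) f) :
    fillingOfChain n k (chainOfFilling n k f) = f := by
  ext c
  rw [fillingOfChain]
  split_ifs with hc
  · rw [chainOfFilling, if_pos (active_of_mem hc), cellOf_timeOf_particleOf hc,
      Nat.add_sub_cancel]
  · exact (hf.1 c hc).symm

lemma chainOfFilling_fillingOfChain {Y : ℕ → ℕ → ℕ} (hY : IsChain n k Y) :
    chainOfFilling n k (fillingOfChain n k Y) = Y := by
  ext t p
  rw [chainOfFilling]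
  split_ifs with h
  · rw [fillingOfChain, if_pos (cellOf_mem h), timeOf_cellOf h, particleOf_cellOf h,
      Nat.sub_add_cancel (hY.le h)]
  · exact (hY.zero t p h).symm

lemma sum_mul_eq (n k : ℕ) :
    ∑ p ∈ Finset.range k, p * (2 * n + 4 * p + 1) = k * (k - 1) * (6 * n + 8 * k - 1) / 6 := by
  refine (Nat.div_eq_of_eq_mul_left (by norm_num) ?_).symm
  induction k with
  | zero => simp
  | succ k ih =>
    rw [Finset.sum_range_succ, Nat.add_mul (∑ p ∈ Finset.range k, _), ← ih]
    rcases k with _ | k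
    · simp
    · simp only [Nat.add_sub_cancel, show 6 * n + 8 * (k + 1) - 1 = 6 * n + 8 * k + 7 by omega,
        show 6 * n + 8 * (k + 1 + 1) - 1 = 6 * n + 8 * k + 15 by omega]
      ring

lemma sum_chainOfFilling (n k : ℕ) (f : ℕ × ℕ → ℕ) :
    ∑ t ∈ Finset.range (2 * (n + 2 * k - 1)), ∑ p ∈ Finset.range k, chainOfFilling n k f t p =
      k * (k - 1) * (6 * n + 8 * k - 1) / 6 + ∑ c ∈ deltaCells (n + 2 * k) \ deltaCells n, f c := by
  have hfil : ∀ p ∈ Finset.range k,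
      (Finset.range (2 * (n + 2 * k - 1))).filter (fun t => Active n k t p) =
        Finset.Ico (2 * (k - p) - 1) (2 * (n + p + k)) := by
    intro p hp
    ext t
    rw [Finset.mem_filter, Finset.mem_Ico, Finset.mem_range, Active]
    rw [Finset.mem_range] at hp
    omega
  simp only [chainOfFilling]
  rw [Finset.sum_comm, ← sum_mul_eq]
  have h1 : ∑ c ∈ deltaCells (n + 2 * k) \ deltaCells n, f c =
      ∑ p ∈ Finset.range k, ∑ t ∈ (Finset.range (2 * (n + 2 * k - 1))).filter
        (fun t => Active n k t p), f (cellOf n k t p) := by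
    rw [Finset.sum_sigma']
    refine Finset.sum_bij' (fun c _ => ⟨particleOf n c, timeOf n k c⟩)
      (fun x _ => cellOf n k x.2 x.1) ?_ ?_ ?_ ?_ ?_
    · intro c hc
      have := active_of_mem hc
      simp only [Finset.mem_sigma, Finset.mem_filter, Finset.mem_range]
      refine ⟨this.1, ?_, this⟩
      simp only [Active] at this
      omega
    · rintro ⟨p, t⟩ h
      simp only [Finset.mem_sigma, Finset.mem_filter] at h
      exact cellOf_mem h.2.2
    · intro c hc
      exact cellOf_timeOf_particleOf hc
    · rintro ⟨p, t⟩ h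
      simp only [Finset.mem_sigma, Finset.mem_filter] at h
      simp only [timeOf_cellOf h.2.2, particleOf_cellOf h.2.2]
    · intro c hc
      rw [cellOf_timeOf_particleOf hc]
  rw [h1, ← Finset.sum_add_distrib]
  refine Finset.sum_congr rfl fun p hp => ?_
  rw [← Finset.sum_filter, Finset.sum_add_distrib, add_comm, Finset.sum_const, hfil p hp,
    Nat.card_Ico, smul_eq_mul, mul_comm]
  congr 2
  have := Finset.mem_range.mp hp
  omega

lemma ncard_isRPP_eq (n k M : ℕ) :
    Set.ncard {f : ℕ × ℕ → ℕ | IsRPP (deltaCells (n + 2 * k) \ deltaCells n) f ∧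
        k * (k - 1) * (6 * n + 8 * k - 1) / 6 +
          ∑ c ∈ deltaCells (n + 2 * k) \ deltaCells n, f c = M} =
      Set.ncard {Y | IsChain n k Y ∧
        ∑ t ∈ Finset.range (2 * (n + 2 * k - 1)), ∑ p ∈ Finset.range k, Y t p = M} := by
  refine Set.ncard_congr (fun f _ => chainOfFilling n k f) ?_ ?_ ?_
  · rintro f ⟨hf, hM⟩
    exact ⟨isChain_chainOfFilling hf, by rw [sum_chainOfFilling, hM]⟩
  · rintro f g ⟨hf, -⟩ ⟨hg, -⟩ h
    rw [← fillingOfChain_chainOfFilling hf, h, fillingOfChain_chainOfFilling hg]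
  · rintro Y ⟨hY, hM⟩
    refine ⟨fillingOfChain n k Y, ⟨isRPP_fillingOfChain hY, ?_⟩, chainOfFilling_fillingOfChain hY⟩
    rw [← sum_chainOfFilling, chainOfFilling_fillingOfChain hY, hM]

end Cells

section Truncation

variable {n k L : ℕ}

lemma mem_chainPred_even [NeZero L] {r : ℕ} {y y' : Fin k → Fin L} :
    y ∈ chainPred n k (2 * r) y' ↔ ∀ p : Fin k, (¬ Active n k (2 * r) p → y p = 0) ∧
      (Active n k (2 * r) p → y p ≤ y' p ∧
        ∀ p' : Fin k, (p : ℕ) = p' + 1 → Active n k (2 * r + 1) p' → y' p' < y p) := by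
  have h2 : 2 * r / 2 = r := by omega
  have ha : ∀ p : Fin k, Active n k (2 * r) p ↔ ¬ (p : ℕ) < valleyStart n k r := fun p => by
    have := p.isLt
    simp only [Active, valleyStart]
    omega
  have hb : ∀ p : Fin k, Active n k (2 * r + 1) p ↔ peakStart n k r ≤ p := fun p => by
    have := p.isLt
    simp only [Active, peakStart]
    omega
  rw [chainPred, if_pos (by omega), Fintype.mem_piFinset, h2]
  refine forall_congr' fun p => ?_
  rw [lowSet]
  split_ifs with hp
  · simp [ha, hp]
  · simp [ha, hb, hp]

lemma mem_chainPred_odd [NeZero L] {r : ℕ} {y y' : Fin k → Fin L} :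
    y ∈ chainPred n k (2 * r + 1) y' ↔ ∀ p : Fin k, (¬ Active n k (2 * r + 1) p → y p = 0) ∧
      (Active n k (2 * r + 1) p → y' p ≤ y p ∧
        ∀ p' : Fin k, (p' : ℕ) = p + 1 → y p < y' p') := by
  have h2 : (2 * r + 1) / 2 = r := by omega
  have ha : ∀ p : Fin k, Active n k (2 * r + 1) p ↔ ¬ (p : ℕ) < peakStart n k r := fun p => by
    have := p.isLt
    simp only [Active, peakStart]
    omega
  rw [chainPred, if_neg (by omega), Fintype.mem_piFinset, h2]
  refine forall_congr' fun p => ?_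
  rw [upSet]
  split_ifs with hp
  · simp [ha, hp]
  · simp [ha, hp]

/-- The positions of the particles, as a function of natural numbers. -/
def extendChain {T : ℕ} (c : Fin (T + 1) → Fin k → Fin L) (t p : ℕ) : ℕ :=
  if h : t < T + 1 ∧ p < k then c ⟨t, h.1⟩ ⟨p, h.2⟩ else 0

lemma Active.lt {t p : ℕ} (h : Active n k t p) : t < 2 * (n + 2 * k - 1) := by
  simp only [Active] at h
  omega

lemma isChain_extendChain_iff [NeZero L]
    (c : Fin (2 * (n + 2 * k - 1) + 1) → Fin k → Fin L) :
    IsChain n k (extendChain c) ↔ c ∈ chains n k (2 * (n + 2 * k - 1)) 0 := by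
  have ext_eq : ∀ t p (ht : t < 2 * (n + 2 * k - 1) + 1) (hp : p < k),
      extendChain c t p = c ⟨t, ht⟩ ⟨p, hp⟩ := fun t p ht hp => dif_pos ⟨ht, hp⟩
  simp only [chains, chainsOf, Finset.mem_filter, Finset.mem_univ, true_and]
  constructor
  · intro h
    constructor
    · ext p
      have := h.zero (2 * (n + 2 * k - 1)) p fun ha => ha.lt.false
      rw [ext_eq _ _ (Nat.lt_succ_self _) p.isLt] at this
      exact this
    · rintro ⟨t, ht⟩
      obtain ⟨r, rfl | rfl⟩ := Nat.even_or_odd' t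
      · refine mem_chainPred_even.mpr fun p => ⟨fun ha => ?_, fun ha => ⟨?_, fun p' hp ha' => ?_⟩⟩
        · have := h.zero _ _ ha
          rw [ext_eq _ _ (by omega) p.isLt] at this
          exact Fin.ext this
        · have := h.up _ _ ha
          rw [ext_eq _ _ (by omega) p.isLt, ext_eq _ _ (by omega) p.isLt] at this
          exact this
        · rw [hp] at ha
          have := h.up_lt _ _ ha ha'
          rw [ext_eq _ _ (by omega) p'.isLt, ext_eq _ _ (by omega) (hp ▸ p.isLt)] at this
          simp only [← hp] at this
          exact this
      · refine mem_chainPred_odd.mpr fun p => ⟨fun ha => ?_, fun ha => ⟨?_, fun p' hp => ?_⟩⟩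
        · have := h.zero _ _ ha
          rw [ext_eq _ _ (by omega) p.isLt] at this
          exact Fin.ext this
        · have := h.down _ _ ha
          rw [ext_eq _ _ (by omega) p.isLt, ext_eq _ _ (by omega) p.isLt] at this
          exact this
        · have := h.down_lt _ _ ha (hp ▸ p'.isLt)
          rw [ext_eq _ _ (by omega) p.isLt, ext_eq _ _ (by omega) (hp ▸ p'.isLt)] at this
          simp only [← hp] at this
          exact this
  · rintro ⟨h₀, h⟩
    have even : ∀ r p (ha : Active n k (2 * r) p), _ := fun r p ha =>
      (mem_chainPred_even.mp (h ⟨2 * r, ha.lt⟩) ⟨p, ha.1⟩).2 ha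
    have odd : ∀ r p (ha : Active n k (2 * r + 1) p), _ := fun r p ha =>
      (mem_chainPred_odd.mp (h ⟨2 * r + 1, ha.lt⟩) ⟨p, ha.1⟩).2 ha
    constructor
    · intro t p ha
      rw [extendChain]
      split_ifs with htp
      · rcases (Nat.lt_succ_iff.mp htp.1).eq_or_lt with rfl | hlt
        · exact congrArg Fin.val (congrFun h₀ ⟨p, htp.2⟩)
        · obtain ⟨r, rfl | rfl⟩ := Nat.even_or_odd' t
          · exact congrArg Fin.val
              ((mem_chainPred_even.mp (h ⟨2 * r, hlt⟩) ⟨p, htp.2⟩).1 ha)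
          · exact congrArg Fin.val
              ((mem_chainPred_odd.mp (h ⟨2 * r + 1, hlt⟩) ⟨p, htp.2⟩).1 ha)
      · rfl
    · intro r p ha
      have := ha.lt
      rw [ext_eq _ _ (by omega) ha.1, ext_eq _ _ (by omega) ha.1]
      exact (even r p ha).1
    · intro r p ha
      have := ha.lt
      rw [ext_eq _ _ (by omega) ha.1, ext_eq _ _ (by omega) ha.1]
      exact (odd r p ha).1
    · intro r p ha ha'
      have := ha.lt
      rw [ext_eq _ _ (by omega) ha.1, ext_eq _ _ (by omega) ha'.1]
      exact (even r (p + 1) ha).2 ⟨p, ha'.1⟩ rfl ha'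
    · intro r p ha hp
      have := ha.lt
      rw [ext_eq _ _ (by omega) hp, ext_eq _ _ (by omega) ha.1]
      exact (odd r p ha).2 ⟨p + 1, hp⟩ rfl

lemma sum_extendChain {T : ℕ} (c : Fin (T + 1) → Fin k → Fin L) :
    ∑ t ∈ Finset.range T, ∑ p ∈ Finset.range k, extendChain c t p =
      ∑ i : Fin T, ∑ p, (c i.castSucc p : ℕ) := by
  rw [Finset.sum_range]
  refine Finset.sum_congr rfl fun i _ => ?_
  rw [Finset.sum_range]
  refine Finset.sum_congr rfl fun p _ => ?_
  exact dif_pos ⟨i.isLt.trans (Nat.lt_succ_self _), p.isLt⟩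

lemma ncard_isChain_eq [NeZero L] {M : ℕ} (hM : M < L) :
    Set.ncard {Y | IsChain n k Y ∧
        ∑ t ∈ Finset.range (2 * (n + 2 * k - 1)), ∑ p ∈ Finset.range k, Y t p = M} =
      ((chains (L := L) n k (2 * (n + 2 * k - 1)) 0).filter fun c =>
        M = ∑ i : Fin (2 * (n + 2 * k - 1)), ∑ p, (c i.castSucc p : ℕ)).card := by
  rw [← Set.ncard_coe_finset]
  symm
  refine Set.ncard_congr (fun c _ => extendChain c) ?_ ?_ ?_
  · intro c hc
    rw [Finset.coe_filter, Set.mem_ofPred_eq] at hc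
    exact ⟨(isChain_extendChain_iff c).mpr hc.1, (sum_extendChain c).trans hc.2.symm⟩
  · intro c c' _ _ h
    ext t p
    have := congrFun (congrFun h t) p
    simpa only [extendChain, t.isLt, p.isLt, and_self, dite_true] using this
  · rintro Y ⟨hY, hw⟩
    have hle : ∀ t p, Y t p < L := by
      intro t p
      by_cases ha : Active n k t p
      · refine lt_of_le_of_lt ?_ hM
        rw [← hw]
        exact (Finset.single_le_sum (f := fun p => Y t p) (fun _ _ => Nat.zero_le _)
          (Finset.mem_range.mpr ha.1)).trans (Finset.single_le_sum
          (f := fun t => ∑ p ∈ Finset.range k, Y t p) (fun _ _ => Nat.zero_le _)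
          (Finset.mem_range.mpr ha.lt))
      · rw [hY.zero t p ha]
        exact Nat.pos_of_neZero L
    have hext : extendChain (T := 2 * (n + 2 * k - 1)) (fun t (p : Fin k) =>
        (⟨Y t p, hle t p⟩ : Fin L)) = Y := by
      ext t p
      rw [extendChain]
      split_ifs with h
      · rfl
      · refine (hY.zero t p fun ha => h ⟨ha.lt.trans (Nat.lt_succ_self _), ha.1⟩).symm
    refine ⟨fun t p => ⟨Y t p, hle t p⟩, ?_, hext⟩
    rw [Finset.coe_filter, Set.mem_ofPred_eq, ← isChain_extendChain_iff, hext]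
    have hsum := sum_extendChain (T := 2 * (n + 2 * k - 1)) fun t (p : Fin k) =>
      (⟨Y t p, hle t p⟩ : Fin L)
    rw [hext, hw] at hsum
    exact ⟨hY, hsum⟩

open PowerSeries in
lemma coeff_X_pow_mul_rppGF [NeZero L] (hk : 0 < k) {M : ℕ} (hM : M < L) :
    coeff M (X ^ (k * (k - 1) * (6 * n + 8 * k - 1) / 6) *
        rppGF (deltaCells (n + 2 * k) \ deltaCells n)) =
      coeff M (Matrix.of fun i j : Fin k => zigzagValley (X : ℚ⟦X⟧) L (n + i + j) 0).det := by
  rw [← sum_chains_eq_hankelDet _ n k hk]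
  simp only [Finset.prod_pow_eq_pow_sum, map_sum, coeff_X_pow]
  rw [Finset.sum_boole, ← ncard_isChain_eq hM, ← ncard_isRPP_eq, coeff_X_pow_mul', rppGF]
  split_ifs with h
  · rw [coeff_mk]
    congr 2
    ext f
    simp only [Set.mem_ofPred_eq]
    refine and_congr_right fun _ => ?_
    omega
  · rw [eq_comm, Nat.cast_eq_zero]
    convert Set.ncard_empty (ℕ × ℕ → ℕ)
    refine Set.eq_empty_of_forall_notMem fun f hf => h ?_
    exact hf.2 ▸ Nat.le_add_right _ _

open PowerSeries in
lemma dvd_sub_of_coeff_eq {R : Type*} [CommRing R] {f g : R⟦X⟧}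
    (h : ∀ M < L, coeff M f = coeff M g) : X ^ L ∣ f - g := by
  rw [X_pow_dvd_iff]
  intro M hM
  rw [map_sub, h M hM, sub_self]

open PowerSeries in
/-- The generating function of reverse plane partitions of a thickened border strip is a Hankel
determinant of generating functions for border strips. -/
theorem X_pow_mul_rppGF_eq_det (n k : ℕ) (hk : 0 < k) :
    X ^ (k * (k - 1) * (6 * n + 8 * k - 1) / 6) * rppGF (deltaCells (n + 2 * k) \ deltaCells n) =
      (Matrix.of fun i j : Fin k =>
        rppGF (deltaCells (n + i + j + 2) \ deltaCells (n + i + j))).det := by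
  ext N
  have hentry : ∀ m, (X : ℚ⟦X⟧) ^ (N + 1) ∣
      rppGF (deltaCells (m + 2) \ deltaCells m) - zigzagValley (X : ℚ⟦X⟧) (N + 1) m 0 := by
    intro m
    refine dvd_sub_of_coeff_eq fun M hM => ?_
    have := coeff_X_pow_mul_rppGF (n := m) (k := 1) (L := N + 1) one_pos hM
    simpa using this
  rw [coeff_X_pow_mul_rppGF (L := N + 1) hk (Nat.lt_succ_self N), ← sub_eq_zero, ← map_sub]
  refine X_pow_dvd_iff.mp ?_ N (Nat.lt_succ_self N)
  rw [← Ideal.mem_span_singleton, ← Ideal.Quotient.mk_eq_mk_iff_sub_mem, RingHom.map_det,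
    RingHom.map_det]
  congr 1
  ext i j
  simp only [RingHom.mapMatrix_apply, Matrix.map_apply, Matrix.of_apply]
  rw [eq_comm, Ideal.Quotient.mk_eq_mk_iff_sub_mem, Ideal.mem_span_singleton]
  exact hentry _

end Truncation

section PPartitions

open PowerSeries

/-- The tuples of natural numbers with a given sum. -/
def tuplesOfSum (N M : ℕ) : Finset (Fin N → ℕ) := Finset.piAntidiag Finset.univ M

@[simp] lemma mem_tuplesOfSum {N M : ℕ} {g : Fin N → ℕ} :
    g ∈ tuplesOfSum N M ↔ ∑ s, g s = M := by
  simp [tuplesOfSum, Finset.mem_piAntidiag]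

/-- The generating function, by sum, of the tuples satisfying a predicate. -/
def tupleGF (N : ℕ) (P : (Fin N → ℕ) → Prop) : ℚ⟦X⟧ :=
  PowerSeries.mk fun M => (((tuplesOfSum N M).filter P).card : ℚ)

/-- The generating function of the image of a family of tuples under a translation. -/
lemma tupleGF_eq_X_pow_mul {N N' e : ℕ} {P : (Fin N → ℕ) → Prop} {P' : (Fin N' → ℕ) → Prop}
    (F : (Fin N' → ℕ) → Fin N → ℕ) (hP : ∀ c, P' c → P (F c))
    (hsum : ∀ c, P' c → ∑ s, F c s = e + ∑ s, c s)
    (hinj : ∀ c c', P' c → P' c' → F c = F c' → c = c') (hsurj : ∀ g, P g → ∃ c, P' c ∧ F c = g) :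
    tupleGF N P = X ^ e * tupleGF N' P' := by
  ext M
  simp only [tupleGF, coeff_X_pow_mul', coeff_mk]
  split_ifs with h
  · rw [Nat.cast_inj]
    symm
    refine Finset.card_bij (fun c _ => F c) ?_ ?_ ?_
    · intro c hc
      simp only [Finset.mem_filter, mem_tuplesOfSum] at hc ⊢
      exact ⟨by rw [hsum c hc.2, hc.1]; omega, hP c hc.2⟩
    · intro c hc c' hc'
      simp only [Finset.mem_filter] at hc hc'
      exact hinj c c' hc.2 hc'.2
    · intro g hg
      simp only [Finset.mem_filter, mem_tuplesOfSum] at hg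
      obtain ⟨c, hc, rfl⟩ := hsurj g hg.2
      have := hsum c hc
      refine ⟨c, ?_, rfl⟩
      simp only [Finset.mem_filter, mem_tuplesOfSum]
      exact ⟨by omega, hc⟩
  · rw [Nat.cast_eq_zero, Finset.card_eq_zero, Finset.filter_eq_empty_iff]
    intro g hg hPg
    obtain ⟨c, hc, rfl⟩ := hsurj g hPg
    rw [mem_tuplesOfSum, hsum c hc] at hg
    omega

lemma tupleGF_and_add_tupleGF_and_not (N : ℕ) (P Q : (Fin N → ℕ) → Prop) :
    tupleGF N (fun g => P g ∧ Q g) + tupleGF N (fun g => P g ∧ ¬ Q g) = tupleGF N P := by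
  ext M
  simp only [tupleGF, map_add, coeff_mk]
  rw [← Nat.cast_add, ← Finset.card_filter_add_card_filter_not (s := (tuplesOfSum N M).filter P) Q]
  congr 3 <;> ext g <;> simp only [Finset.mem_filter, and_assoc]

lemma tupleGF_zero (P : (Fin 0 → ℕ) → Prop) (hP : ∀ g, P g) : tupleGF 0 P = 1 := by
  ext M
  rw [tupleGF, coeff_mk, coeff_one]
  split_ifs with h
  · subst h
    rw [Nat.cast_eq_one, Finset.card_eq_one]
    refine ⟨0, ?_⟩
    ext g
    simp [hP, Subsingleton.elim g 0]
  · rw [Nat.cast_eq_zero, Finset.card_eq_zero]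
    refine Finset.eq_empty_of_forall_notMem fun g hg => h ?_
    have hM := mem_tuplesOfSum.mp (Finset.mem_of_mem_filter g hg)
    rwa [Finset.univ_eq_empty, Finset.sum_empty, eq_comm] at hM

lemma tupleGF_antitone_mul_pochPS (N : ℕ) : tupleGF N Antitone * pochPS N = 1 := by
  induction N with
  | zero =>
    rw [pochPS, Finset.Icc_eq_empty_of_lt one_pos, Finset.prod_empty, mul_one,
      tupleGF_zero _ fun g => Subsingleton.antitone g]
  | succ N ih =>
    have h0 : tupleGF (N + 1) (fun g => Antitone g ∧ g (Fin.last N) = 0) =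
        X ^ 0 * tupleGF N Antitone := by
      refine tupleGF_eq_X_pow_mul (fun c => Fin.snoc (α := fun _ => ℕ) c 0) ?_ ?_ ?_ ?_
      · intro c hc
        refine ⟨fun i j hij => ?_, Fin.snoc_last ..⟩
        induction j using Fin.lastCases with
        | last => simp
        | cast j =>
          induction i using Fin.lastCases with
          | last => exact absurd hij (Fin.castSucc_lt_last j).not_ge
          | cast i =>
            simp only [Fin.snoc_castSucc]
            exact hc hij
      · intro c _
        simp [Fin.sum_univ_castSucc]
      · intro c c' _ _ h
        ext i
        simpa using congrFun h i.castSucc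
      · rintro g ⟨hg, h0⟩
        refine ⟨fun i => g i.castSucc, fun i j hij => hg (Fin.castSucc_le_castSucc_iff.mpr hij), ?_⟩
        ext i
        induction i using Fin.lastCases with
        | last => simp [h0]
        | cast i => simp
    have h1 : tupleGF (N + 1) (fun g => Antitone g ∧ ¬ g (Fin.last N) = 0) =
        X ^ (N + 1) * tupleGF (N + 1) Antitone := by
      refine tupleGF_eq_X_pow_mul (fun c s => c s + 1) ?_ ?_ ?_ ?_
      · exact fun c hc => ⟨fun i j hij => Nat.add_le_add_right (hc hij) 1, Nat.succ_ne_zero _⟩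
      · intro c _
        rw [Finset.sum_add_distrib, add_comm]
        simp
      · intro c c' _ _ h
        ext i
        exact Nat.succ_injective (congrFun h i)
      · rintro g ⟨hg, h0⟩
        refine ⟨fun s => g s - 1, fun i j hij => Nat.sub_le_sub_right (hg hij) 1, ?_⟩
        ext i
        have := hg (Fin.le_last i)
        simp only
        omega
    have h := tupleGF_and_add_tupleGF_and_not (N + 1) Antitone fun g => g (Fin.last N) = 0
    rw [h0, h1, pow_zero, one_mul] at h
    rw [← ih, pochPS, Finset.prod_Icc_succ_top (Nat.le_add_left 1 N), ← pochPS]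
    linear_combination - pochPS N * h

/-- The number of descents of a word of length `N` that are greater than `s`. -/
def descentsAbove (N : ℕ) (w : ℕ → ℕ) (s : ℕ) : ℕ :=
  ∑ i ∈ Finset.Ico (s + 1) N, if w (i + 1) < w i then 1 else 0

lemma sum_descentsAbove (N : ℕ) (w : ℕ → ℕ) :
    ∑ s : Fin N, descentsAbove N w s = majW N w := by
  rw [← Finset.sum_range (f := fun s => descentsAbove N w s), majW]
  simp only [descentsAbove]
  rw [Finset.sum_comm' (t' := Finset.Icc 1 (N - 1)) (s' := fun i => Finset.range i)]
  · refine Finset.sum_congr rfl fun i _ => ?_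
    simp
  · intro s i
    simp only [Finset.mem_range, Finset.mem_Ico, Finset.mem_Icc]
    omega

lemma descentsAbove_eq_add {N : ℕ} (w : ℕ → ℕ) {s : ℕ} (hs : s + 1 < N) :
    descentsAbove N w s =
      (if w (s + 2) < w (s + 1) then 1 else 0) + descentsAbove N w (s + 1) := by
  rw [descentsAbove, Finset.sum_eq_sum_Ico_succ_bot hs, descentsAbove]

/-- The generating function of the tuples compatible with a word. -/
lemma tupleGF_compatible (n : ℕ) (w : ℕ → ℕ) :
    tupleGF (n + 1) (fun l => ∀ i : Fin n,
      l i.succ + (if w (i + 2) < w (i + 1) then 1 else 0) ≤ l i.castSucc) =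
        X ^ majW (n + 1) w * tupleGF (n + 1) Antitone := by
  refine tupleGF_eq_X_pow_mul (fun c s => c s + descentsAbove (n + 1) w s) ?_ ?_ ?_ ?_
  · intro c hc i
    have h1 := descentsAbove_eq_add (N := n + 1) w (Nat.succ_lt_succ i.isLt)
    have h2 := hc i.castSucc_le_succ
    simp only [Fin.val_succ, Fin.val_castSucc]
    omega
  · intro c _
    rw [Finset.sum_add_distrib, sum_descentsAbove, add_comm]
  · intro c c' _ _ h
    ext i
    exact Nat.add_right_cancel (congrFun h i)
  · intro l hl
    have hle : ∀ s : Fin (n + 1), descentsAbove (n + 1) w s ≤ l s := by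
      intro s
      induction s using Fin.reverseInduction with
      | last => simp [descentsAbove]
      | cast i ih =>
        have h1 := descentsAbove_eq_add (N := n + 1) w (Nat.succ_lt_succ i.isLt)
        have h2 := hl i
        simp only [Fin.val_succ, Fin.val_castSucc] at *
        omega
    refine ⟨fun s => l s - descentsAbove (n + 1) w s, Fin.antitone_iff_succ_le.mpr fun i => ?_, ?_⟩
    · have h1 := descentsAbove_eq_add (N := n + 1) w (Nat.succ_lt_succ i.isLt)
      have h2 := hl i
      simp only [Fin.val_succ, Fin.val_castSucc] at *
      omega
    · ext s
      exact Nat.sub_add_cancel (hle s)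

end PPartitions

section Sorting

open PowerSeries

/-- Sorting by this key lists the indices by decreasing values of `g`, with ties broken by
increasing labels `ω`. -/
def sortKey {N : ℕ} (ω : Fin N → ℕ) (g : Fin N → ℕ) (s : Fin N) : ℕᵒᵈ ×ₗ ℕ :=
  toLex (OrderDual.toDual (g s), ω s)

lemma sortKey_lt_iff {N : ℕ} {ω : Fin N → ℕ} {g : Fin N → ℕ} {s t : Fin N} :
    sortKey ω g s < sortKey ω g t ↔ g t < g s ∨ g s = g t ∧ ω s < ω t := by
  rw [sortKey, sortKey, Prod.Lex.toLex_lt_toLex]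
  simp

lemma sortKey_injective {N : ℕ} {ω : Fin N → ℕ} (hω : Function.Injective ω) (g : Fin N → ℕ) :
    Function.Injective (sortKey ω g) := fun _ _ h =>
  hω (congrArg Prod.snd (toLex.injective h))

lemma strictMono_sortKey_sort {N : ℕ} {ω : Fin N → ℕ} (hω : Function.Injective ω)
    (g : Fin N → ℕ) : StrictMono (sortKey ω g ∘ Tuple.sort (sortKey ω g)) :=
  (Tuple.monotone_sort _).strictMono_of_injective
    ((sortKey_injective hω g).comp (Equiv.injective _))

lemma sort_sortKey_eq_iff {N : ℕ} {ω : Fin N → ℕ} (hω : Function.Injective ω) (g : Fin N → ℕ)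
    (w : Equiv.Perm (Fin N)) :
    Tuple.sort (sortKey ω g) = w ↔ StrictMono (sortKey ω g ∘ w) := by
  constructor
  · rintro rfl
    exact strictMono_sortKey_sort hω g
  · intro h
    have := Tuple.unique_monotone (strictMono_sortKey_sort hω g).monotone h.monotone
    exact Equiv.ext fun s => sortKey_injective hω g (congrFun this s)

lemma sort_symm_lt_iff {N : ℕ} {ω : Fin N → ℕ} (hω : Function.Injective ω) (g : Fin N → ℕ)
    (s t : Fin N) : (Tuple.sort (sortKey ω g)).symm s < (Tuple.sort (sortKey ω g)).symm t ↔
      g t < g s ∨ g s = g t ∧ ω s < ω t := by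
  rw [← sortKey_lt_iff, ← (strictMono_sortKey_sort hω g).lt_iff_lt]
  simp

lemma word_val_add_one {N : ℕ} (π : Equiv.Perm (Fin N)) (s : Fin N) :
    word π (s + 1) = π s + 1 := by
  rw [word, dif_pos ⟨Nat.le_add_left 1 _, s.isLt⟩]
  rfl

/-- The generating function of the tuples that are sorted by a given permutation. -/
lemma tupleGF_sort_eq {n : ℕ} {ω : ℕ → ℕ}
    (hω : Function.Injective fun s : Fin (n + 1) => ω (s + 1)) (w : Equiv.Perm (Fin (n + 1))) :
    tupleGF (n + 1) (fun g => Tuple.sort (sortKey (fun s => ω (s + 1)) g) = w) =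
      X ^ majW (n + 1) (fun i => ω (word w i)) * tupleGF (n + 1) Antitone := by
  have key : ∀ l : Fin (n + 1) → ℕ,
      Tuple.sort (sortKey (fun s => ω (s + 1)) (l ∘ w.symm)) = w ↔ ∀ i : Fin n,
        l i.succ + (if ω (word w (i + 2)) < ω (word w (i + 1)) then 1 else 0) ≤
          l i.castSucc := by
    intro l
    rw [sort_sortKey_eq_iff hω, Fin.strictMono_iff_lt_succ]
    refine forall_congr' fun i => ?_
    have h1 : word w (i + 1) = w i.castSucc + 1 := word_val_add_one w i.castSucc
    have h2 : word w (i + 2) = w i.succ + 1 := word_val_add_one w i.succ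
    have hne : ω (w i.castSucc + 1) ≠ ω (w i.succ + 1) := fun h =>
      (Fin.castSucc_lt_succ (i := i)).ne (w.injective (hω h))
    rw [h1, h2]
    simp only [Function.comp_apply, sortKey_lt_iff, Equiv.symm_apply_apply]
    split_ifs <;> omega
  rw [← tupleGF_compatible, ← one_mul (tupleGF _ fun l => ∀ i : Fin n, _), ← pow_zero X]
  refine tupleGF_eq_X_pow_mul (fun l => l ∘ w.symm) (fun l hl => (key l).mpr hl) ?_ ?_ ?_
  · intro l _
    rw [zero_add]
    exact Equiv.sum_comp w.symm l
  · intro l l' _ _ h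
    exact w.symm.surjective.injective_comp_right h
  · intro g hg
    have hgw : (g ∘ w) ∘ w.symm = g := by
      ext s
      simp
    exact ⟨g ∘ w, (key _).mp (by rwa [hgw]), hgw⟩

/-- A tuple that weakly rises to each of its entries of even index. -/
def IsZigzag {n : ℕ} (g : Fin (n + 1) → ℕ) : Prop :=
  ∀ i : Fin n, ((i : ℕ) % 2 = 0 → g i.succ ≤ g i.castSucc) ∧
    ((i : ℕ) % 2 = 1 → g i.castSucc ≤ g i.succ)

lemma kappaNat_injective (m : ℕ) :
    Function.Injective fun s : Fin (2 * m + 1) => kappaNat (2 * m + 1) (s + 1) := by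
  intro s t h
  have hs := s.isLt
  have ht := t.isLt
  ext
  simp only [kappaNat] at h
  split_ifs at h <;> omega

lemma isZigzag_iff {m : ℕ} (g : Fin (2 * m + 1) → ℕ) :
    IsZigzag g ↔
      (Tuple.sort (sortKey (fun s => kappaNat (2 * m + 1) (s + 1)) g)).symm ∈
        altPerms (2 * m + 1) := by
  set π := (Tuple.sort (sortKey (fun s => kappaNat (2 * m + 1) (s + 1)) g)).symm with hπ
  have hword : ∀ i : Fin (2 * m), word π (i + 1) = π i.castSucc + 1 ∧
      word π (i + 1 + 1) = π i.succ + 1 := fun i =>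
    ⟨word_val_add_one π i.castSucc, word_val_add_one π i.succ⟩
  have halt : IsAltW (2 * m + 1) (word π) ↔ ∀ i : Fin (2 * m),
      ((i : ℕ) % 2 = 0 → π i.castSucc < π i.succ) ∧
        ((i : ℕ) % 2 = 1 → π i.succ < π i.castSucc) := by
    constructor
    · intro h i
      have := h (i + 1) (Finset.mem_Icc.mpr ⟨by omega, by omega⟩)
      rw [(hword i).1, (hword i).2] at this
      simp only [Fin.lt_def]
      exact ⟨fun hi => by have := this.1 (by omega); omega,
        fun hi => by have := this.2 (by omega); omega⟩
    · intro h i hi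
      rw [Finset.mem_Icc] at hi
      obtain ⟨i, rfl⟩ : ∃ j, i = j + 1 := ⟨i - 1, by omega⟩
      have hlt : i < 2 * m := by omega
      have := h ⟨i, hlt⟩
      have hw := hword ⟨i, hlt⟩
      simp only [Fin.lt_def] at this hw
      rw [hw.1, hw.2]
      exact ⟨fun hi => by have := this.1 (by omega); omega,
        fun hi => by have := this.2 (by omega); omega⟩
  rw [altPerms, Finset.mem_filter, and_iff_right (Finset.mem_univ _), halt]
  refine forall_congr' fun i => ?_
  rw [hπ, sort_symm_lt_iff (kappaNat_injective m), sort_symm_lt_iff (kappaNat_injective m)]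
  have hi := i.isLt
  refine and_congr (imp_congr_right fun h => ?_) (imp_congr_right fun h => ?_)
  · have : kappaNat (2 * m + 1) (i.castSucc + 1) < kappaNat (2 * m + 1) (i.succ + 1) := by
      simp only [kappaNat, Fin.val_castSucc, Fin.val_succ]
      split_ifs <;> omega
    omega
  · have : kappaNat (2 * m + 1) (i.succ + 1) < kappaNat (2 * m + 1) (i.castSucc + 1) := by
      simp only [kappaNat, Fin.val_castSucc, Fin.val_succ]
      split_ifs <;> omega
    omega

lemma tupleGF_eq_sum {N : ℕ} {S : Type*} (f : (Fin N → ℕ) → S) (A : Finset S)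
    (P : (Fin N → ℕ) → Prop) (hP : ∀ g, P g ↔ f g ∈ A) :
    tupleGF N P = ∑ a ∈ A, tupleGF N fun g => f g = a := by
  ext M
  simp only [tupleGF, map_sum, coeff_mk]
  rw [← Nat.cast_sum, Finset.card_eq_sum_card_fiberwise (f := f) (t := A)]
  · congr 1
    refine Finset.sum_congr rfl fun a ha => congrArg _ ?_
    ext g
    simp only [Finset.mem_filter]
    exact ⟨fun h => ⟨h.1.1, h.2⟩, fun h => ⟨⟨h.1, (hP g).mpr (h.2 ▸ ha)⟩, h.2⟩⟩
  · exact fun g hg => (hP g).mp (Finset.mem_filter.mp hg).2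

lemma tupleGF_isZigzag (m : ℕ) :
    tupleGF (2 * m + 1) IsZigzag = EstarPS (2 * m + 1) * tupleGF (2 * m + 1) Antitone := by
  rw [tupleGF_eq_sum _ _ _ isZigzag_iff, EstarPS, Finset.sum_mul]
  refine Finset.sum_congr rfl fun π _ => ?_
  rw [majKappaInv, ← tupleGF_sort_eq (kappaNat_injective m) π.symm]
  congr 1
  ext g
  exact ⟨fun h => by rw [← h, Equiv.symm_symm], fun h => by rw [h, Equiv.symm_symm]⟩

lemma rppGF_eq_tupleGF (m : ℕ) :
    rppGF (deltaCells (m + 2) \ deltaCells m) = tupleGF (2 * m + 1) IsZigzag := by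
  ext M
  have hact : ∀ t p, Active m 1 t p ↔ p = 0 ∧ 1 ≤ t ∧ t < 2 * m + 2 := by
    intro t p
    simp only [Active]
    omega
  have h := ncard_isRPP_eq m 1 M
  rw [show 1 * (1 - 1) * (6 * m + 8 * 1 - 1) / 6 = 0 by simp, show m + 2 * 1 = m + 2 from rfl] at h
  simp only [zero_add, Finset.range_one, Finset.sum_singleton] at h
  rw [rppGF, tupleGF, coeff_mk, coeff_mk, h, ← Set.ncard_coe_finset, Nat.cast_inj]
  have hsum : ∀ Y : ℕ → ℕ → ℕ, Y 0 0 = 0 →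
      ∑ t ∈ Finset.range (2 * (m + 2 - 1)), Y t 0 = ∑ s : Fin (2 * m + 1), Y (s + 1) 0 := by
    intro Y hY
    rw [show 2 * (m + 2 - 1) = 2 * m + 1 + 1 by omega, Finset.sum_range_succ', hY, add_zero,
      Finset.sum_range]
  refine Set.ncard_congr (fun Y _ => fun s : Fin (2 * m + 1) => Y (s + 1) 0) ?_ ?_ ?_
  · rintro Y ⟨hY, hM⟩
    rw [Finset.coe_filter, Set.mem_ofPred_eq, mem_tuplesOfSum,
      ← hsum Y (hY.zero _ _ (by simp [hact]))]
    refine ⟨hM, fun i => ⟨fun hi => ?_, fun hi => ?_⟩⟩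
    · have := hY.down (i / 2) 0 ((hact _ _).mpr (by omega))
      rwa [show 2 * ((i : ℕ) / 2) = i by omega] at this
    · have := hY.up (i / 2 + 1) 0 ((hact _ _).mpr (by omega))
      rwa [show 2 * ((i : ℕ) / 2 + 1) = i + 1 by omega] at this
  · rintro Y Y' ⟨hY, -⟩ ⟨hY', -⟩ h
    ext t p
    by_cases ha : Active m 1 t p
    · obtain ⟨rfl, h1, h2⟩ := (hact t p).mp ha
      obtain ⟨t, rfl⟩ : ∃ u, t = u + 1 := ⟨t - 1, by omega⟩
      exact congrFun h ⟨t, by omega⟩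
    · rw [hY.zero t p ha, hY'.zero t p ha]
  · intro g hg
    rw [Finset.coe_filter, Set.mem_ofPred_eq, mem_tuplesOfSum] at hg
    obtain ⟨Y, hYg, hY⟩ : ∃ Y : ℕ → ℕ → ℕ, (∀ s : Fin (2 * m + 1), Y (s + 1) 0 = g s) ∧
        ∀ t p, ¬ Active m 1 t p → Y t p = 0 := by
      refine ⟨fun t p => if h : p = 0 ∧ 1 ≤ t ∧ t < 2 * m + 2 then g ⟨t - 1, by omega⟩ else 0,
        fun s => dif_pos ⟨rfl, by omega, by omega⟩, fun t p h => dif_neg ?_⟩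
      rwa [← hact]
    refine ⟨Y, ⟨⟨hY, fun r p h => ?_, fun r p h => ?_, fun r p h => ?_, fun r p h hp => ?_⟩, ?_⟩,
      funext hYg⟩
    · obtain ⟨rfl, h1, h2⟩ := (hact _ _).mp h
      obtain ⟨r, rfl⟩ : ∃ u, r = u + 1 := ⟨r - 1, by omega⟩
      have hr : 2 * r + 1 < 2 * m := by omega
      have := (hg.2 ⟨2 * r + 1, hr⟩).2 (by simp only; omega)
      rwa [← hYg, ← hYg] at this
    · obtain ⟨rfl, h1, h2⟩ := (hact _ _).mp h
      by_cases h' : Active m 1 (2 * r + 2) 0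
      · have hr : 2 * r < 2 * m := by rw [hact] at h'; omega
        have := (hg.2 ⟨2 * r, hr⟩).1 (by simp only; omega)
        rwa [← hYg, ← hYg] at this
      · rw [hY _ _ h']
        exact Nat.zero_le _
    · exact absurd ((hact _ _).mp h).1 (Nat.succ_ne_zero p)
    · exact absurd hp (by omega)
    · rw [hsum Y (hY _ _ (by simp [hact])), ← hg.1]
      exact Finset.sum_congr rfl fun s _ => hYg s

/-- The generating function of reverse plane partitions of a zigzag border strip. -/
theorem rppGF_borderStrip (m : ℕ) :
    rppGF (deltaCells (m + 2) \ deltaCells m) =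
      EstarPS (2 * m + 1) * (pochPS (2 * m + 1))⁻¹ := by
  have h := tupleGF_antitone_mul_pochPS (2 * m + 1)
  have h0 : constantCoeff (pochPS (2 * m + 1)) ≠ 0 := by
    intro h0
    have := congrArg (constantCoeff (R := ℚ)) h
    rw [map_mul, h0, mul_zero, map_one] at this
    exact zero_ne_one this
  rw [rppGF_eq_tupleGF, tupleGF_isZigzag, PowerSeries.eq_mul_inv_iff_mul_eq h0, mul_assoc, h,
    mul_one]

end Sorting

theorem statement_16 (n k : ℕ) (hn : 0 < n) (hk : 0 < k) :
    (PowerSeries.X : PowerSeries ℚ) ^ (k * (k - 1) * (6 * n + 8 * k - 1) / 6) *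
        rppGF (deltaCells (n + 2 * k) \ deltaCells n) =
      (Matrix.of fun i j : Fin k =>
        EstarPS (2 * n + 2 * (i : ℕ) + 2 * (j : ℕ) + 1) *
          (pochPS (2 * n + 2 * (i : ℕ) + 2 * (j : ℕ) + 1))⁻¹).det := by
  rw [X_pow_mul_rppGF_eq_det n k hk]
  congr 1
  ext i j : 2
  rw [Matrix.of_apply, Matrix.of_apply, rppGF_borderStrip]
  ring_nf

end Paper
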